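/- For every ε ∈ (0, 0.1], every real σ ∈ (0, 1], and all integers m ≥ 1, n ≥ 1, K ≥ 2, A ≥ 3, and H ≥ 8n + m + 1, there exists a finite family ℳ of finite episodic POMDPs with horizon H such that: (1) every M ∈ ℳ has |𝒮| = 2ⁿ + 4 latent states, |𝒪| = 2ⁿ + 2K + 3 observations, and |𝒜| = A actions; (2) every M ∈ ℳ is (m+1)-step α-revealing with α = σ/(σ + 2); (3) |ℳ| ≤ 2^K · A^H · (2ⁿ+4) · A · H; (4) for every T ∈ ℕ and every T-episode algorithm 𝔄, max_{M∈ℳ} E_M^𝔄[Regret] ≥ (1/120000) · min{ 2^{n−1}·K^{1/2}·A^{m+1}·H/(m·σ²ε²), 2^{n−1}·A^{H/2}·H/(m·ε), ε·T }; and (5) for every T ∈ ℕ and every T-episode algorithm 𝔄 whose output satisfies ℙ_M^𝔄( V_M⋆ − V_M(π^out) < ε/8 ) ≥ 3/4 for every M ∈ ℳ, one must have T ≥ (1/60000) · min{ 2^{n−1}·K^{1/2}·A^{m+1}·H/(σ²ε²), 2^{n−1}·A^{H/2}·H/ε² }. -/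

import Mathlib

/-! The hard models hide a combination lock behind a binary tree. Descending the tree uses the actions
`0, 1`; any other action leaves the tree for the lock. At one secret (step, node, action), the
*entry*, the lock is reached in the flagged state with probability `ε`, otherwise unflagged; both
locks look the same. At the lock the first `r = ⌊A/3⌋` actions *reveal*: they move to an emitting
state showing one of `K` signed symbols, whose signs are uniform in the unflagged state and
correlated, with strength `s`, with a hidden sign vector `v` in the flagged state; then the episode
is over without reward. The other actions stay in the lock, but from a fixed step on, any deviation
from a secret *password* loses the flag. At the last step the lock pays `1` when flagged and `1`
with probability `1/2` when unflagged. The reference model is the one with bias `0`.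

* Revealing condition (`Par.mdl_revealing`): two consecutive observations after a revealing action
  give an unbiased estimate of the indicator of each state, of total size `2/s + 1`. Averaging it
  over the `r A^{m-1}` action sequences beginning with a revealing action gives a left inverse of
  norm at most `(2/s + 1) / √(r A^{m-1})`, which is at most `1 + 2/σ` for `s = σ / √(r A^{m-1})`.
* Suboptimality (`Par.gap`): each reveal costs `1/2`, and each episode that does not hold the flagged
  lock at the end costs `ε/2`. Along one trajectory at most one (entry, password) pair can be
  flagged at the last step, and at most one entry at a reveal.
* Indistinguishability (`core`, `Par.family_core`): the likelihood ratio of a biased model to the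
  reference model is a product over episodes of `1 + ε X` with `X` centred and bounded. It is
  truncated once one parameter has been probed more than `N1 ≈ √K / (10 ε² s²)` times by reveals or
  `N2 ≈ 1 / (50 ε²)` times by final visits. The second moment of the ratio averaged over `v` is
  bounded through the moment generating function of the correlation of two random sign vectors, and
  this is where `√K` comes from (`mgf_bound`). If the expected number of reveals is at most
  `|Ent| (N1 + 1) / 8` and the number of episodes at most `|Ent| |Pw| (N2 + 1) / 8`, then some model
  of the family is not identified.

An algorithm identifying all models therefore needs many episodes (`Par.family_pac`). For the regret,
either there are many reveals, which is costly in the reference model, or some biased model costs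
`ε/8` per episode (`Par.family_regret`).
-/

open Finset

noncomputable section

/-- A finite episodic POMDP with horizon `H`, latent state space `S`, observation space `O`,
action space `A`.  Steps are indexed by `1, …, H` (paper convention). -/
structure POMDP (S O A : Type) [Fintype S] [Fintype O] [Fintype A] (H : ℕ) where
  init : S → ℝ
  init_nonneg : ∀ s, 0 ≤ init s
  init_sum : ∑ s, init s = 1
  trans : ℕ → S → A → S → ℝ
  trans_nonneg : ∀ h s a s', 0 ≤ trans h s a s'
  trans_sum : ∀ h s a, ∑ s', trans h s a s' = 1
  emit : ℕ → S → O → ℝ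
  emit_nonneg : ∀ h s o, 0 ≤ emit h s o
  emit_sum : ∀ h s, ∑ o, emit h s o = 1
  reward : ℕ → O → A → ℝ
  reward_nonneg : ∀ h o a, 0 ≤ reward h o a
  reward_le_one : ∀ h o a, reward h o a ≤ 1
  reward_total : ∀ τ : Fin H → O × A, ∑ h : Fin H, reward (h.1 + 1) (τ h).1 (τ h).2 ≤ 1

namespace POMDP

variable {S O A : Type} [Fintype S] [Fintype O] [Fintype A] {H : ℕ}

/-- `emitActProb M m h s ω a` is the probability `ℙ_M(o_{h:h+m−1} = ω | s_h = s,
a_{h:h+m−2} = a)` of observing the sequence `ω ∈ 𝒪^m` when the latent state at (1-based)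
step `h` is `s` and the action sequence `a ∈ 𝒜^{m−1}` is executed. -/
def emitActProb (M : POMDP S O A H) : (m : ℕ) → ℕ → S → (Fin m → O) → (Fin (m - 1) → A) → ℝ
  | 0, _, _, _, _ => 1
  | 1, h, s, ω, _ => M.emit h s (ω 0)
  | m + 2, h, s, ω, a =>
    M.emit h s (ω 0) *
      ∑ s' : S, M.trans h s (a ⟨0, Nat.succ_pos m⟩) s' *
        emitActProb M (m + 1) (h + 1) s' (fun i => ω i.succ) (fun i => a i.succ)

/-- The `m`-step emission–action matrix `𝕄_{h,m}` (`h` is the 1-based step index). -/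
def emitActMatrix (M : POMDP S O A H) (h m : ℕ) :
    Matrix ((Fin m → O) × (Fin (m - 1) → A)) S ℝ :=
  Matrix.of fun p s => M.emitActProb m h s p.1 p.2

/-- The set of columns of the step-(h−1) transition matrix `𝕋_{h−1}`
(the single column `μ₁` when `h = 1`). -/
def stepCols (M : POMDP S O A H) (h : ℕ) : Set (S → ℝ) :=
  if h = 1 then {fun s => M.init s}
  else {c | ∃ s' a', c = fun s => M.trans (h - 1) s' a' s}

/-- `B` is a generalized left inverse of `𝕄_{h,m}`, i.e. `B · 𝕄_{h,m} · 𝕋_{h−1} = 𝕋_{h−1}`. -/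
def IsGenLeftInv (M : POMDP S O A H) (h m : ℕ)
    (B : Matrix S ((Fin m → O) × (Fin (m - 1) → A)) ℝ) : Prop :=
  ∀ c ∈ M.stepCols h, (B * M.emitActMatrix h m).mulVec c = c

end POMDP

/-- The star-norm `‖x‖_* = (Σ_a (Σ_ω |x(ω,a)|)²)^{1/2}`. -/
def starNorm {ι κ : Type} [Fintype ι] [Fintype κ] (x : ι × κ → ℝ) : ℝ :=
  Real.sqrt (∑ a : κ, (∑ ω : ι, |x (ω, a)|) ^ 2)

/-- The `(*→1)`-operator norm `‖B‖_{*→1} = max_{‖x‖_* ≤ 1} ‖Bx‖₁`. -/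
def opNormStarOne {S ι κ : Type} [Fintype S] [Fintype ι] [Fintype κ]
    (B : Matrix S (ι × κ) ℝ) : ℝ :=
  sSup {y | ∃ x : ι × κ → ℝ, starNorm x ≤ 1 ∧ y = ∑ s, |B.mulVec x s|}

/-- The `(1→1)`-operator norm `‖B‖_{1→1} = max_{‖y‖₁ ≤ 1} ‖By‖₁`. -/
def opNormOneOne {ι₁ ι₂ : Type} [Fintype ι₁] [Fintype ι₂] (B : Matrix ι₁ ι₂ ℝ) : ℝ :=
  sSup {y | ∃ v : ι₂ → ℝ, (∑ i, |v i|) ≤ 1 ∧ y = ∑ j, |B.mulVec v j|}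

namespace POMDP
variable {S O A : Type} [Fintype S] [Fintype O] [Fintype A] {H : ℕ}

/-- `M` is `m`-step `α`-revealing. -/
def IsRevealing (M : POMDP S O A H) (m : ℕ) (α : ℝ) : Prop :=
  ∀ h ∈ Finset.Icc 1 (H - m + 1),
    ∃ B : Matrix S ((Fin m → O) × (Fin (m - 1) → A)) ℝ,
      M.IsGenLeftInv h m B ∧ opNormStarOne B ≤ 1 / α

end POMDP

/-- A history-dependent policy: a distribution over actions for every (history, observation). -/
structure Policy (O A : Type) [Fintype A] where
  act : List (O × A) → O → A → ℝ
  act_nonneg : ∀ τ o a, 0 ≤ act τ o a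
  act_sum : ∀ τ o, ∑ a, act τ o a = 1

namespace POMDP
variable {S O A : Type} [Fintype S] [Fintype O] [Fintype A] {H : ℕ}

/-- The probability `ℙ_M^π(τ)` of a full trajectory `τ = (o_1,a_1,…,o_H,a_H)`. -/
def trajProb (M : POMDP S O A H) (π : Policy O A) (τ : Fin H → O × A) : ℝ :=
  ∑ s : Fin H → S, ∏ h : Fin H,
    (if h.1 = 0 then M.init (s h)
     else
       M.trans h.1 (s ⟨h.1 - 1, Nat.lt_of_le_of_lt (Nat.sub_le _ _) h.2⟩)
         (τ ⟨h.1 - 1, Nat.lt_of_le_of_lt (Nat.sub_le _ _) h.2⟩).2 (s h)) *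
    M.emit (h.1 + 1) (s h) (τ h).1 *
    π.act ((List.ofFn τ).take h.1) (τ h).1 (τ h).2

/-- The value `V_M(π)` of a policy. -/
def value (M : POMDP S O A H) (π : Policy O A) : ℝ :=
  ∑ τ : Fin H → O × A, M.trajProb π τ * ∑ h : Fin H, M.reward (h.1 + 1) (τ h).1 (τ h).2

/-- The optimal value `V_M⋆`. -/
def optValue (M : POMDP S O A H) : ℝ := ⨆ π : Policy O A, M.value π

end POMDP

/-- A `T`-episode algorithm: a distribution over actions for every
(past episodes, within-episode history, current observation), and an output policy map. -/
structure Algorithm (O A : Type) [Fintype A] (H : ℕ) where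
  act : List (Fin H → O × A) → List (O × A) → O → A → ℝ
  act_nonneg : ∀ past hist o a, 0 ≤ act past hist o a
  act_sum : ∀ past hist o, ∑ a, act past hist o a = 1
  out : List (Fin H → O × A) → Policy O A

/-- The policy executed by algorithm `𝔄` in the episode following the past episodes `past`. -/
def Algorithm.policyAt {O A : Type} [Fintype A] {H : ℕ} (𝔄 : Algorithm O A H)
    (past : List (Fin H → O × A)) : Policy O A :=
  ⟨fun hist o a => 𝔄.act past hist o a, fun _ _ _ => 𝔄.act_nonneg _ _ _ _,
    fun _ _ => 𝔄.act_sum _ _ _⟩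

namespace POMDP
variable {S O A : Type} [Fintype S] [Fintype O] [Fintype A] {H : ℕ}

/-- The law `ℙ_M^𝔄` of the transcript `(τ^{(1)},…,τ^{(T)})`. -/
def transcriptProb (M : POMDP S O A H) (𝔄 : Algorithm O A H) {T : ℕ}
    (τs : Fin T → Fin H → O × A) : ℝ :=
  ∏ t : Fin T, M.trajProb (𝔄.policyAt ((List.ofFn τs).take t.1)) (τs t)

open Classical in
/-- `ℙ_M^𝔄(V_M⋆ − V_M(π^out) < ε)`. -/
def pacProb (M : POMDP S O A H) (𝔄 : Algorithm O A H) (T : ℕ) (ε : ℝ) : ℝ :=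
  ∑ τs : Fin T → Fin H → O × A,
    if M.optValue - M.value (𝔄.out (List.ofFn τs)) < ε then M.transcriptProb 𝔄 τs else 0

/-- The expected regret `E_M^𝔄[Σ_{t=1}^T (V_M⋆ − V_M(π^{(t)}))]`. -/
def expRegret (M : POMDP S O A H) (𝔄 : Algorithm O A H) (T : ℕ) : ℝ :=
  ∑ τs : Fin T → Fin H → O × A,
    M.transcriptProb 𝔄 τs *
      ∑ t : Fin T, (M.optValue - M.value (𝔄.policyAt ((List.ofFn τs).take t.1)))

end POMDP

/-! ### Trajectory laws and episode processes -/

namespace HardFam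

section Generic

variable {S O A : Type} [Fintype S] [Fintype O] [Fintype A] {H : ℕ}

/-- Expectation of `G`, a function of the remaining trajectory, over `k` further steps played by
`π` from latent state `s` at step `h` after the history `hist`. -/
def rollout (M : POMDP S O A H) (π : Policy O A) :
    ℕ → ℕ → List (O × A) → S → (List (O × A) → ℝ) → ℝ
  | 0, _, _, _, G => G []
  | k + 1, h, hist, s, G =>
    ∑ o, M.emit h s o * ∑ a, π.act hist o a * ∑ s', M.trans h s a s' *
      rollout M π k (h + 1) (hist ++ [(o, a)]) s' (fun l => G ((o, a) :: l))

/-- Probability of the trajectory segment `τ` of length `k` played from step `h + 1` after the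
history `hist`, when the latent state at step `h + 1` has law `w`.  With `h = 0` and `w` the
initial distribution this is `POMDP.trajProb`. -/
def segProb (M : POMDP S O A H) (π : Policy O A) (k h : ℕ) (hist : List (O × A)) (w : S → ℝ)
    (τ : Fin k → O × A) : ℝ :=
  ∑ s : Fin k → S, ∏ i : Fin k,
    (if i.1 = 0 then w (s i)
     else
       M.trans (h + i.1) (s ⟨i.1 - 1, Nat.lt_of_le_of_lt (Nat.sub_le _ _) i.2⟩)
         (τ ⟨i.1 - 1, Nat.lt_of_le_of_lt (Nat.sub_le _ _) i.2⟩).2 (s i)) *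
    M.emit (h + i.1 + 1) (s i) (τ i).1 *
    π.act (hist ++ (List.ofFn τ).take i.1) (τ i).1 (τ i).2

lemma trajProb_eq_segProb (M : POMDP S O A H) (π : Policy O A) (τ : Fin H → O × A) :
    M.trajProb π τ = segProb M π H 0 [] M.init τ := by
  simp [POMDP.trajProb, segProb]

lemma sum_fin_succ {α : Type} [Fintype α] {k : ℕ} (f : (Fin (k + 1) → α) → ℝ) :
    ∑ x, f x = ∑ y : α, ∑ z : Fin k → α, f (Fin.cons y z) := by
  rw [← (Fin.consEquiv (fun _ : Fin (k + 1) => α)).sum_comp, Fintype.sum_prod_type]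
  rfl

lemma segProb_cons (M : POMDP S O A H) (π : Policy O A) (k h : ℕ) (hist : List (O × A))
    (w : S → ℝ) (p : O × A) (τ : Fin k → O × A) :
    segProb M π (k + 1) h hist w (Fin.cons p τ) =
      ∑ s, w s * M.emit (h + 1) s p.1 * π.act hist p.1 p.2 *
        segProb M π k (h + 1) (hist ++ [p]) (M.trans (h + 1) s p.2) τ := by
  unfold segProb
  rw [sum_fin_succ]
  refine Finset.sum_congr rfl fun s _ => ?_
  rw [Finset.mul_sum]
  refine Finset.sum_congr rfl fun t _ => ?_
  rw [Fin.prod_univ_succ]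
  congr 1
  · simp
  refine Finset.prod_congr rfl fun i _ => ?_
  have e1 : h + 1 + i.1 = h + (i.1 + 1) := by omega
  have e2 : hist ++ [p] ++ (List.ofFn τ).take i.1 =
      hist ++ (List.ofFn (Fin.cons p τ : Fin (k + 1) → O × A)).take (i.1 + 1) := by
    simp
  rcases i with ⟨i, hi⟩
  rw [e2]
  rcases i with _ | i
  · simp [Fin.cons]
  · have e3 : h + 1 + (i + 1) = h + (i + 1 + 1) := by omega
    simp only [e3, Fin.succ_mk, Nat.add_sub_cancel]
    simp [Fin.cons]

/-- The trajectory law of `POMDP.trajProb` agrees with the step-by-step expectation. -/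
lemma sum_segProb (M : POMDP S O A H) (π : Policy O A) (k : ℕ) :
    ∀ (h : ℕ) (hist : List (O × A)) (w : S → ℝ) (G : List (O × A) → ℝ), ∑ s, w s = 1 →
      ∑ τ, segProb M π k h hist w τ * G (List.ofFn τ) =
        ∑ s, w s * rollout M π k (h + 1) hist s G := by
  induction k with
  | zero =>
    intro h hist w G hw
    simp [segProb, rollout, ← Finset.sum_mul, hw]
  | succ k ih =>
    intro h hist w G hw
    rw [sum_fin_succ]
    simp only [segProb_cons, rollout, Finset.mul_sum]
    rw [Fintype.sum_prod_type]
    have : ∀ (o : O) (a : A), ∑ τ : Fin k → O × A,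
        (∑ s, w s * M.emit (h + 1) s o * π.act hist o a *
          segProb M π k (h + 1) (hist ++ [(o, a)]) (M.trans (h + 1) s a) τ) *
          G (List.ofFn (Fin.cons (o, a) τ : Fin (k + 1) → O × A)) =
        ∑ s, w s * M.emit (h + 1) s o * π.act hist o a * ∑ s', M.trans (h + 1) s a s' *
          rollout M π k (h + 2) (hist ++ [(o, a)]) s' (fun l => G ((o, a) :: l)) := by
      intro o a
      simp only [Finset.sum_mul]
      rw [Finset.sum_comm]
      refine Finset.sum_congr rfl fun s _ => ?_
      have := ih (h + 1) (hist ++ [(o, a)]) (M.trans (h + 1) s a) (fun l => G ((o, a) :: l))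
        (M.trans_sum _ _ _)
      rw [← this, Finset.mul_sum]
      refine Finset.sum_congr rfl fun τ _ => ?_
      simp [mul_assoc]
    simp only [this]
    have h2 : ∀ o : O, ∑ a : A, ∑ s, w s * M.emit (h + 1) s o * π.act hist o a *
        ∑ s', M.trans (h + 1) s a s' *
          rollout M π k (h + 2) (hist ++ [(o, a)]) s' (fun l => G ((o, a) :: l)) =
        ∑ s, ∑ a : A, w s * M.emit (h + 1) s o * π.act hist o a *
        ∑ s', M.trans (h + 1) s a s' *
          rollout M π k (h + 2) (hist ++ [(o, a)]) s' (fun l => G ((o, a) :: l)) :=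
      fun o => Finset.sum_comm
    simp only [h2]
    rw [Finset.sum_comm]
    refine Finset.sum_congr rfl fun s _ => Finset.sum_congr rfl fun o _ =>
      Finset.sum_congr rfl fun a _ => ?_
    rw [Finset.mul_sum]
    refine Finset.sum_congr rfl fun s' _ => ?_
    ring

lemma sum_trajProb (M : POMDP S O A H) (π : Policy O A) (G : List (O × A) → ℝ) :
    ∑ τ, M.trajProb π τ * G (List.ofFn τ) = ∑ s, M.init s * rollout M π H 1 [] s G := by
  simp only [trajProb_eq_segProb]
  exact sum_segProb M π H 0 [] M.init G M.init_sum

lemma trajProb_nonneg (M : POMDP S O A H) (π : Policy O A) (τ : Fin H → O × A) :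
    0 ≤ M.trajProb π τ := by
  unfold POMDP.trajProb
  refine Finset.sum_nonneg fun s _ => Finset.prod_nonneg fun h _ => ?_
  refine mul_nonneg (mul_nonneg ?_ (M.emit_nonneg _ _ _)) (π.act_nonneg _ _ _)
  split_ifs
  · exact M.init_nonneg _
  · exact M.trans_nonneg _ _ _ _

lemma rollout_const (M : POMDP S O A H) (π : Policy O A) (c : ℝ) (k : ℕ) :
    ∀ (h : ℕ) (hist : List (O × A)) (s : S), rollout M π k h hist s (fun _ => c) = c := by
  induction k with
  | zero => intros; rfl
  | succ k ih =>
    intro h hist s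
    simp [rollout, ih, ← Finset.sum_mul, M.trans_sum, π.act_sum, M.emit_sum]

lemma trajProb_sum (M : POMDP S O A H) (π : Policy O A) : ∑ τ, M.trajProb π τ = 1 := by
  have := sum_trajProb M π (fun _ => 1)
  simpa [rollout_const, M.init_sum] using this

lemma value_le_one (M : POMDP S O A H) (π : Policy O A) : M.value π ≤ 1 := by
  unfold POMDP.value
  calc _ ≤ ∑ τ : Fin H → O × A, M.trajProb π τ * 1 :=
        Finset.sum_le_sum fun τ _ =>
          mul_le_mul_of_nonneg_left (M.reward_total τ) (trajProb_nonneg M π τ)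
    _ = 1 := by simp [trajProb_sum]

lemma value_le_optValue (M : POMDP S O A H) (π : Policy O A) : M.value π ≤ M.optValue :=
  le_ciSup (f := fun π : Policy O A => M.value π)
    ⟨1, by rintro _ ⟨π, rfl⟩; exact value_le_one M π⟩ π

end Generic

section Episodic

lemma ofFn_snoc {α : Type} {k : ℕ} (z : Fin k → α) (y : α) :
    List.ofFn (Fin.snoc (α := fun _ => α) z y) = List.ofFn z ++ [y] := by
  rw [List.ofFn_succ', List.concat_eq_append]
  simp

variable {τ : Type} [Fintype τ]

/-- Expectation of `f` over the first `T` episodes of a process whose next episode has law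
`q l`, where `l` lists the past episodes, the most recent one first. -/
def expect (q : List τ → τ → ℝ) : ℕ → (List τ → ℝ) → ℝ
  | 0, f => f []
  | T + 1, f => expect q T (fun l => ∑ x, q l x * f (x :: l))

lemma sum_fin_snoc {k : ℕ} (f : (Fin (k + 1) → τ) → ℝ) :
    ∑ x, f x = ∑ z : Fin k → τ, ∑ y : τ, f (Fin.snoc (α := fun _ => τ) z y) := by
  rw [← (Fin.snocEquiv (fun _ : Fin (k + 1) => τ)).sum_comp, Fintype.sum_prod_type,
    Finset.sum_comm]
  rfl

/-- A sum over transcripts against sequentially factored weights is an `expect`. -/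
lemma sum_prod_eq_expect (p : List τ → τ → ℝ) (T : ℕ) :
    ∀ f : List τ → ℝ,
      ∑ x : Fin T → τ, (∏ t : Fin T, p ((List.ofFn x).take t.1) (x t)) *
        f (List.ofFn x).reverse = expect (fun l => p l.reverse) T f := by
  induction T with
  | zero => intro f; simp [expect]
  | succ T ih =>
    intro f
    rw [sum_fin_snoc, expect, ← ih]
    refine Finset.sum_congr rfl fun z _ => ?_
    rw [Finset.mul_sum]
    refine Finset.sum_congr rfl fun y _ => ?_
    rw [Fin.prod_univ_castSucc, ofFn_snoc]
    have h1 : ∀ t : Fin T, (List.ofFn z ++ [y]).take t.castSucc.1 = (List.ofFn z).take t.1 := by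
      intro t
      rw [List.take_append_of_le_length (by simp [t.2.le])]
      simp
    have h2 : (List.ofFn z ++ [y]).take (Fin.last T).1 = List.ofFn z := by
      rw [List.take_append_of_le_length (by simp)]
      simp [List.take_of_length_le]
    simp only [h1, h2, Fin.snoc_castSucc, Fin.snoc_last]
    simp [mul_assoc]

variable {q : List τ → τ → ℝ}

lemma expect_congr_q {q' : List τ → τ → ℝ} (h : ∀ l x, q l x = q' l x) (T : ℕ)
    (f : List τ → ℝ) : expect q T f = expect q' T f := by
  have : q = q' := funext fun l => funext fun x => h l x
  rw [this]

lemma expect_add (T : ℕ) : ∀ f g : List τ → ℝ,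
    expect q T (fun l => f l + g l) = expect q T f + expect q T g := by
  induction T with
  | zero => intros; rfl
  | succ T ih => intro f g; simp only [expect, mul_add, Finset.sum_add_distrib, ih]

lemma expect_mul (c : ℝ) (T : ℕ) : ∀ f : List τ → ℝ,
    expect q T (fun l => c * f l) = c * expect q T f := by
  induction T with
  | zero => intros; rfl
  | succ T ih =>
    intro f
    simp only [expect]
    rw [← ih]
    congr 1
    funext l
    rw [Finset.mul_sum]
    exact Finset.sum_congr rfl fun x _ => by ring

lemma expect_sub (T : ℕ) (f g : List τ → ℝ) :
    expect q T (fun l => f l - g l) = expect q T f - expect q T g := by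
  have := expect_add (q := q) T f (fun l => (-1) * g l)
  rw [expect_mul] at this
  simpa [sub_eq_add_neg] using this

lemma expect_sum {ι : Type} (s : Finset ι) (T : ℕ) (f : ι → List τ → ℝ) :
    expect q T (fun l => ∑ i ∈ s, f i l) = ∑ i ∈ s, expect q T (f i) := by
  classical
  induction s using Finset.induction_on with
  | empty => simpa using expect_mul (q := q) 0 T (fun _ => 0)
  | insert a s ha ih => simp only [Finset.sum_insert ha, expect_add, ih]

lemma expect_mono (hq : ∀ l x, 0 ≤ q l x) (T : ℕ) : ∀ f g : List τ → ℝ, (∀ l, f l ≤ g l) →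
    expect q T f ≤ expect q T g := by
  induction T with
  | zero => intro f g h; exact h _
  | succ T ih =>
    intro f g h
    exact ih _ _ fun l => Finset.sum_le_sum fun x _ => mul_le_mul_of_nonneg_left (h _) (hq _ _)

lemma expect_const (hs : ∀ l, ∑ x, q l x = 1) (c : ℝ) (T : ℕ) :
    expect q T (fun _ => c) = c := by
  induction T with
  | zero => rfl
  | succ T ih => simp only [expect, ← Finset.sum_mul, hs, one_mul, ih]

lemma expect_mart (T : ℕ) (f : List τ → ℝ) (h : ∀ l, ∑ x, q l x * f (x :: l) = f l) :
    expect q T f = f [] := by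
  induction T with
  | zero => rfl
  | succ T ih => simp only [expect, h, ih]

/-- Change of measure along the whole process. -/
lemma expect_change (r : τ → ℝ) (T : ℕ) : ∀ f : List τ → ℝ,
    expect (fun l x => q l x * r x) T f = expect q T (fun l => (l.map r).prod * f l) := by
  induction T with
  | zero => intro f; simp [expect]
  | succ T ih =>
    intro f
    simp only [expect]
    rw [ih]
    congr 1
    funext l
    rw [Finset.mul_sum]
    refine Finset.sum_congr rfl fun x _ => ?_
    simp only [List.map_cons, List.prod_cons]
    ring

end Episodic

end HardFam

/-! ### Truncated likelihood ratios and the testing bound -/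

namespace HardFam

/-- The sign `±1` encoded by a Boolean. -/
def sg (b : Bool) : ℝ := if b then 1 else -1

lemma sg_sq (b : Bool) : sg b * sg b = 1 := by cases b <;> simp [sg]

lemma abs_sg (b : Bool) : |sg b| = 1 := by cases b <;> simp [sg]

/-- Normalised correlation of two sign vectors. -/
def corr {K : ℕ} (v v' : Fin K → Bool) : ℝ := (∑ k, sg (v k) * sg (v' k)) / K

lemma abs_corr_le {K : ℕ} (v v' : Fin K → Bool) : |corr v v'| ≤ 1 := by
  unfold corr
  rw [abs_div, Nat.abs_cast]
  refine div_le_one_of_le₀ ?_ (Nat.cast_nonneg _)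
  refine (Finset.abs_sum_le_sum_abs _ _).trans ?_
  simp [abs_mul, abs_sg]

/-- Moment generating function of the correlation with a uniformly random sign vector. -/
lemma sum_exp_corr {K : ℕ} (v : Fin K → Bool) (c : ℝ) :
    ∑ v' : Fin K → Bool, Real.exp (c * corr v v') = 2 ^ K * Real.cosh (c / K) ^ K := by
  have h1 : ∀ v' : Fin K → Bool, Real.exp (c * corr v v') =
      ∏ k, Real.exp (c / K * (sg (v k) * sg (v' k))) := by
    intro v'
    rw [← Real.exp_sum, ← Finset.mul_sum]
    congr 1
    unfold corr
    ring
  simp only [h1]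
  have h2 := (Finset.prod_univ_sum (fun _ : Fin K => (Finset.univ : Finset Bool))
    (fun k b => Real.exp (c / K * (sg (v k) * sg b))))
  rw [Fintype.piFinset_univ] at h2
  rw [← h2, ← mul_pow]
  rw [Finset.prod_congr rfl (g := fun _ => 2 * Real.cosh (c / K))]
  · simp
  · intro k _
    rw [Real.cosh_eq]
    cases v k <;> simp [sg] <;> ring

lemma exp_small : Real.exp (1 / 50) ≤ 1.0203 := by
  have := Real.exp_bound' (x := 1 / 50) (by norm_num) (by norm_num) (n := 3) (by norm_num)
  refine this.trans ?_
  norm_num [Finset.sum_range_succ, Nat.factorial]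

/-- The second-moment estimate that produces the factor `√K`: for `lam ≤ √K / 10` the average
over `v'` of `1 + |exp (lam · corr v v') - 1|` stays close to `1`. -/
lemma mgf_bound {K : ℕ} (hK : 1 ≤ K) (v : Fin K → Bool) (lam : ℝ) (h0 : 0 ≤ lam)
    (hlam : lam ≤ Real.sqrt K / 10) :
    ∑ v' : Fin K → Bool, (1 + |Real.exp (lam * corr v v') - 1|) ≤ 2 ^ K * 1.15 := by
  have hKpos : (0 : ℝ) < K := by exact_mod_cast hK
  have hpt : ∀ v' : Fin K → Bool, 1 + |Real.exp (lam * corr v v') - 1| ≤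
      (7 / 2) * Real.exp (2 * lam * corr v v') - 7 * Real.exp (lam * corr v v')
        + (7 / 2 + 1 + 1 / 14) := by
    intro v'
    have e : Real.exp (2 * lam * corr v v') = Real.exp (lam * corr v v') ^ 2 := by
      rw [sq, ← Real.exp_add]; ring_nf
    rw [e]
    set y := Real.exp (lam * corr v v')
    nlinarith [sq_nonneg (|y - 1| - 1 / 7), sq_abs (y - 1)]
  refine (Finset.sum_le_sum fun v' _ => hpt v').trans ?_
  rw [Finset.sum_add_distrib, Finset.sum_sub_distrib, ← Finset.mul_sum, ← Finset.mul_sum,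
    sum_exp_corr, sum_exp_corr]
  have hl2 : lam ^ 2 ≤ K / 100 := by
    have := Real.sq_sqrt hKpos.le
    have h := pow_le_pow_left₀ h0 hlam 2
    rw [div_pow, this] at h
    norm_num at h ⊢
    exact h
  have h1 : Real.cosh (2 * lam / K) ^ K ≤ 1.0203 := by
    refine le_trans ?_ exp_small
    calc Real.cosh (2 * lam / K) ^ K ≤ Real.exp ((2 * lam / K) ^ 2 / 2) ^ K :=
          pow_le_pow_left₀ (Real.cosh_pos _).le (Real.cosh_le_exp_half_sq _) _
      _ = Real.exp (2 * lam ^ 2 / K) := by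
          rw [← Real.exp_nat_mul]; congr 1; field_simp
      _ ≤ Real.exp (1 / 50) := by
          apply Real.exp_le_exp.2
          rw [div_le_iff₀ hKpos]
          linarith
  have h2 : (1 : ℝ) ≤ Real.cosh (lam / K) ^ K := one_le_pow₀ (Real.one_le_cosh _)
  have h3 : (0 : ℝ) < 2 ^ K := by positivity
  simp only [Finset.sum_const, Finset.card_univ, Fintype.card_fun, Fintype.card_bool,
    Fintype.card_fin, nsmul_eq_mul, Nat.cast_pow, Nat.cast_ofNat]
  nlinarith [mul_le_mul_of_nonneg_left h1 h3.le, mul_le_mul_of_nonneg_left h2 h3.le]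

section Core

variable {τ : Type}

/-- Total count of a feature over a list of episodes. -/
def cnt (N : τ → ℕ) (l : List τ) : ℕ := (l.map N).sum

/-- Coefficient of the signal in one factor of the truncated likelihood ratio: reveals count only
while fewer than `N1` have occurred, full matches only while fewer than `N2` have occurred. -/
def coef (ε : ℝ) (N1 N2 : ℕ) (N F : τ → ℕ) (l : List τ) (x : τ) : ℝ :=
  (if cnt N l < N1 then ε else 0) * N x + (if cnt F l < N2 then ε else 0) * F x

/-- Truncated likelihood ratio of a perturbed model against the reference model. -/
def trunc (ε : ℝ) (N1 N2 : ℕ) (N F : τ → ℕ) (X : τ → ℝ) : List τ → ℝ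
  | [] => 1
  | x :: l => trunc ε N1 N2 N F X l * (1 + coef ε N1 N2 N F l x * X x)

variable {ε : ℝ} {N1 N2 : ℕ} {N F : τ → ℕ} {X : τ → ℝ}

lemma coef_mem (hε : 0 ≤ ε) (hε1 : ε ≤ 1) (hNF : ∀ x, N x + F x ≤ 1) (l : List τ) (x : τ) :
    0 ≤ coef ε N1 N2 N F l x ∧ coef ε N1 N2 N F l x ≤ 1 := by
  have h := hNF x
  have : (N x = 0 ∧ F x = 0) ∨ (N x = 1 ∧ F x = 0) ∨ (N x = 0 ∧ F x = 1) := by omega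
  unfold coef
  rcases this with ⟨a, b⟩ | ⟨a, b⟩ | ⟨a, b⟩ <;> rw [a, b] <;> split_ifs <;>
    norm_num <;> try exact ⟨hε, hε1⟩

lemma trunc_nonneg (hε : 0 ≤ ε) (hε1 : ε ≤ 1) (hNF : ∀ x, N x + F x ≤ 1)
    (hX : ∀ x, |X x| ≤ 1) (l : List τ) : 0 ≤ trunc ε N1 N2 N F X l := by
  induction l with
  | nil => simp [trunc]
  | cons x l ih =>
    refine mul_nonneg ih ?_
    obtain ⟨h1, h2⟩ := coef_mem (N1 := N1) (N2 := N2) hε hε1 hNF l x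
    have := abs_le.1 (hX x)
    nlinarith

/-- While the counts respect the thresholds, truncation has no effect. -/
lemma trunc_eq (hNF : ∀ x, N x + F x ≤ 1) (hX0 : ∀ x, N x + F x = 0 → X x = 0) (l : List τ)
    (h1 : cnt N l ≤ N1) (h2 : cnt F l ≤ N2) :
    trunc ε N1 N2 N F X l = (l.map fun x => 1 + ε * X x).prod := by
  induction l with
  | nil => simp [trunc]
  | cons x l ih =>
    simp only [cnt, List.map_cons, List.sum_cons] at h1 h2
    have i1 : cnt N l ≤ N1 := by unfold cnt; omega
    have i2 : cnt F l ≤ N2 := by unfold cnt; omega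
    rw [trunc, ih i1 i2, List.map_cons, List.prod_cons, mul_comm]
    congr 1
    have h := hNF x
    have : (N x = 0 ∧ F x = 0) ∨ (N x = 1 ∧ F x = 0) ∨ (N x = 0 ∧ F x = 1) := by omega
    unfold coef
    rcases this with ⟨a, b⟩ | ⟨a, b⟩ | ⟨a, b⟩
    · rw [hX0 x (by omega)]; simp
    · have : cnt N l < N1 := by unfold cnt; omega
      simp [a, b, this]
    · have : cnt F l < N2 := by unfold cnt; omega
      simp [a, b, this]

variable [Fintype τ]

/-- Second moments of truncated likelihood ratios: the compensated product
`trunc X · trunc X' / ((1 + κ ε²)^{#N} (1 + ε²)^{#F})` is a martingale. -/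
lemma expect_trunc_mul {q : List τ → τ → ℝ} (hq : ∀ l x, 0 ≤ q l x) {X' : τ → ℝ} {κ B : ℝ}
    (hε : 0 ≤ ε) (hε1 : ε ≤ 1) (hNF : ∀ x, N x + F x ≤ 1)
    (hX : ∀ x, |X x| ≤ 1) (hX' : ∀ x, |X' x| ≤ 1)
    (hpos : 0 < 1 + κ * ε ^ 2)
    (step : ∀ l (c1 c2 : ℝ), 0 < 1 + κ * c1 ^ 2 →
      ∑ x, q l x * ((1 + (c1 * N x + c2 * F x) * X x) * (1 + (c1 * N x + c2 * F x) * X' x) /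
        ((1 + κ * c1 ^ 2) ^ N x * (1 + c2 ^ 2) ^ F x)) = 1)
    (hB : ∀ j ≤ N1, (1 + κ * ε ^ 2) ^ j ≤ B) (T : ℕ) :
    expect q T (fun l => trunc ε N1 N2 N F X l * trunc ε N1 N2 N F X' l) ≤
      (1 + ε ^ 2) ^ N2 * B := by
  set D : List τ → ℝ := fun l =>
    (1 + κ * ε ^ 2) ^ (min (cnt N l) N1) * (1 + ε ^ 2) ^ (min (cnt F l) N2) with hD
  have hDpos : ∀ l, 0 < D l := fun l => by simp only [hD]; positivity
  have hDle : ∀ l, D l ≤ (1 + ε ^ 2) ^ N2 * B := by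
    intro l
    rw [mul_comm]
    refine mul_le_mul (hB _ (min_le_right _ _)) ?_ (by positivity) ?_
    · exact pow_le_pow_right₀ (by nlinarith) (min_le_right _ _)
    · exact le_trans zero_le_one (by simpa using hB 0 (Nat.zero_le _))
  have hmart : expect q T (fun l => trunc ε N1 N2 N F X l * trunc ε N1 N2 N F X' l / D l) = 1 := by
    rw [expect_mart]
    · simp [trunc, hD, cnt]
    intro l
    set c1 : ℝ := if cnt N l < N1 then ε else 0 with hc1
    set c2 : ℝ := if cnt F l < N2 then ε else 0 with hc2
    have hp : 0 < 1 + κ * c1 ^ 2 := by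
      rw [hc1]; split_ifs
      · exact hpos
      · norm_num
    have hDs : ∀ x, D (x :: l) = D l * ((1 + κ * c1 ^ 2) ^ N x * (1 + c2 ^ 2) ^ F x) := by
      intro x
      have h := hNF x
      have e1 : (1 + κ * ε ^ 2) ^ (min (cnt N (x :: l)) N1) =
          (1 + κ * ε ^ 2) ^ (min (cnt N l) N1) * (1 + κ * c1 ^ 2) ^ N x := by
        have hc : cnt N (x :: l) = N x + cnt N l := by simp [cnt]
        have : N x = 0 ∨ N x = 1 := by omega
        rw [hc, hc1]
        rcases this with a | a <;> rw [a]
        · simp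
        · split_ifs with hlt
          · rw [← pow_add]; congr 1; omega
          · have : min (1 + cnt N l) N1 = min (cnt N l) N1 := by omega
            rw [this]; simp
      have e2 : (1 + ε ^ 2) ^ (min (cnt F (x :: l)) N2) =
          (1 + ε ^ 2) ^ (min (cnt F l) N2) * (1 + c2 ^ 2) ^ F x := by
        have hc : cnt F (x :: l) = F x + cnt F l := by simp [cnt]
        have : F x = 0 ∨ F x = 1 := by omega
        rw [hc, hc2]
        rcases this with a | a <;> rw [a]
        · simp
        · split_ifs with hlt
          · rw [← pow_add]; congr 1; omega
          · have : min (1 + cnt F l) N2 = min (cnt F l) N2 := by omega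
            rw [this]; simp
      simp only [hD, e1, e2]
      ring
    have := step l c1 c2 hp
    calc _ = ∑ x, (trunc ε N1 N2 N F X l * trunc ε N1 N2 N F X' l / D l) * (q l x *
        ((1 + (c1 * N x + c2 * F x) * X x) * (1 + (c1 * N x + c2 * F x) * X' x) /
        ((1 + κ * c1 ^ 2) ^ N x * (1 + c2 ^ 2) ^ F x))) := by
          refine Finset.sum_congr rfl fun x _ => ?_
          rw [hDs x, trunc, trunc]
          have hc : coef ε N1 N2 N F l x = c1 * N x + c2 * F x := rfl
          rw [hc]
          have := (hDpos l).ne'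
          have h3 : (1 + κ * c1 ^ 2) ^ N x ≠ 0 := (pow_pos hp _).ne'
          have h4 : (1 + c2 ^ 2) ^ F x ≠ 0 := by positivity
          field_simp
      _ = _ := by rw [← Finset.mul_sum, this, mul_one]
  calc _ ≤ expect q T (fun l => ((1 + ε ^ 2) ^ N2 * B) *
        (trunc ε N1 N2 N F X l * trunc ε N1 N2 N F X' l / D l)) := by
        refine expect_mono hq T _ _ fun l => ?_
        have h0 := mul_nonneg (trunc_nonneg (N1 := N1) (N2 := N2) hε hε1 hNF hX l)
          (trunc_nonneg (N1 := N1) (N2 := N2) hε hε1 hNF hX' l)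
        rw [mul_div_assoc', le_div_iff₀ (hDpos l), mul_comm]
        exact mul_le_mul_of_nonneg_right (hDle l) h0
    _ = _ := by rw [expect_mul, hmart, mul_one]

lemma expect_trunc {q : List τ → τ → ℝ}
    (step : ∀ l (c1 c2 : ℝ), ∑ x, q l x * (1 + (c1 * N x + c2 * F x) * X x) = 1) (T : ℕ) :
    expect q T (fun l => trunc ε N1 N2 N F X l) = 1 := by
  rw [expect_mart]
  · simp [trunc]
  intro l
  have := step l (if cnt N l < N1 then ε else 0) (if cnt F l < N2 then ε else 0)
  calc _ = ∑ x, trunc ε N1 N2 N F X l * (q l x * (1 + coef ε N1 N2 N F l x * X x)) :=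
        Finset.sum_congr rfl fun x _ => by rw [trunc]; ring
    _ = _ := by rw [← Finset.mul_sum]; unfold coef; rw [this, mul_one]

lemma expect_length {q : List τ → τ → ℝ} (hs : ∀ l, ∑ x, q l x = 1) (T : ℕ) :
    expect q T (fun l => (l.length : ℝ)) = T := by
  induction T with
  | zero => simp [expect]
  | succ T ih =>
    simp only [expect, List.length_cons, Nat.cast_add, Nat.cast_one, ← Finset.sum_mul, hs, one_mul]
    rw [expect_add, ih, expect_const hs]

lemma pow_le_one_add_abs_exp {x : ℝ} (hx : 0 < 1 + x) {j n : ℕ} (hj : j ≤ n) :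
    (1 + x) ^ j ≤ 1 + |Real.exp (n * x) - 1| := by
  rcases le_total 0 x with h | h
  · calc (1 + x) ^ j ≤ (1 + x) ^ n := pow_le_pow_right₀ (by linarith) hj
      _ ≤ Real.exp x ^ n := pow_le_pow_left₀ hx.le (by linarith [Real.add_one_le_exp x]) _
      _ = Real.exp (n * x) := by rw [← Real.exp_nat_mul]
      _ ≤ _ := by linarith [le_abs_self (Real.exp (n * x) - 1)]
  · have : (1 + x) ^ j ≤ 1 := pow_le_one₀ hx.le (by linarith)
    linarith [abs_nonneg (Real.exp (n * x) - 1)]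

/-- Lower bound on the `Y`-expectation averaged over the sign vector, for one parameter: up to the
truncation events and the `L¹` distance of the mixture, bounded by a second moment computation,
the mixture behaves like the reference process. -/
lemma mixture_lower {K : ℕ} (hK : 1 ≤ K) {q : List τ → τ → ℝ} (hq : ∀ l x, 0 ≤ q l x)
    (hs : ∀ l, ∑ x, q l x = 1) {s : ℝ} (hε : 0 ≤ ε) (hε1 : ε ≤ 0.1) (hs0 : 0 ≤ s)
    (hs1 : s ≤ 1) (hN1 : N1 * (ε ^ 2 * s ^ 2) ≤ Real.sqrt K / 10) (hN2 : N2 * ε ^ 2 ≤ 1 / 50)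
    {X : (Fin K → Bool) → τ → ℝ} (hNF : ∀ x, N x + F x ≤ 1) (hX : ∀ v x, |X v x| ≤ 1)
    (hX0 : ∀ v x, N x + F x = 0 → X v x = 0)
    (hone : ∀ v l (c1 c2 : ℝ), ∑ x, q l x * (1 + (c1 * N x + c2 * F x) * X v x) = 1)
    (hpair : ∀ v v' l (c1 c2 : ℝ), 0 < 1 + (s ^ 2 * corr v v') * c1 ^ 2 →
      ∑ x, q l x * ((1 + (c1 * N x + c2 * F x) * X v x) * (1 + (c1 * N x + c2 * F x) * X v' x) /
        ((1 + (s ^ 2 * corr v v') * c1 ^ 2) ^ N x * (1 + c2 ^ 2) ^ F x)) = 1)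
    {Y : List τ → ℝ} (hY0 : ∀ l, 0 ≤ Y l) (hY1 : ∀ l, Y l ≤ 1) (T : ℕ)
    (hsmall : ∀ v, expect (fun l x => q l x * (1 + ε * X v x)) T Y ≤ 1 / 4) :
    expect q T Y - expect q T (fun l => (cnt N l : ℝ)) / (N1 + 1) -
      expect q T (fun l => (cnt F l : ℝ)) / (N2 + 1) - 0.42 ≤ 1 / 4 := by
  have hε1' : ε ≤ 1 := by linarith
  set L : (Fin K → Bool) → List τ → ℝ := fun v => trunc ε N1 N2 N F (X v) with hL
  have hL0 : ∀ v l, 0 ≤ L v l := fun v l => trunc_nonneg hε hε1' hNF (hX v) l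
  set c : ℝ := 1 / 2 ^ K with hc
  have hcpos : 0 < c := by positivity
  have hcard : (∑ _v : Fin K → Bool, (1 : ℝ)) = 2 ^ K := by simp
  have hcc : c * 2 ^ K = 1 := by rw [hc]; field_simp
  set Lb : List τ → ℝ := fun l => c * ∑ v, L v l with hLb
  have hEL : expect q T Lb = 1 := by
    rw [hLb, expect_mul, expect_sum]
    simp only [hL, expect_trunc (hone _), hcard, hcc]
  have hEL2 : expect q T (fun l => Lb l * Lb l) ≤ 1.15 * 1.0203 := by
    have e : ∀ l, Lb l * Lb l = c * (c * ∑ v, ∑ v', L v l * L v' l) := by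
      intro l
      simp only [hLb]
      rw [← Finset.sum_mul_sum]; ring
    simp only [e]
    rw [expect_mul, expect_mul, expect_sum]
    have hb : ∀ v, expect q T (fun l => ∑ v', L v l * L v' l) ≤ 2 ^ K * 1.15 * 1.0203 := by
      intro v
      rw [expect_sum]
      have hpt : ∀ v', expect q T (fun l => L v l * L v' l) ≤
          1.0203 * (1 + |Real.exp (N1 * (ε ^ 2 * s ^ 2) * corr v v') - 1|) := by
        intro v'
        have hcr := abs_le.1 (abs_corr_le v v')
        have hpos : 0 < 1 + (s ^ 2 * corr v v') * ε ^ 2 := by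
          have h1 : s ^ 2 * ε ^ 2 ≤ 0.01 := by
            have : s ^ 2 ≤ 1 := pow_le_one₀ hs0 hs1
            have : ε ^ 2 ≤ 0.01 := by nlinarith
            nlinarith [sq_nonneg ε, sq_nonneg s]
          nlinarith [mul_nonneg (sq_nonneg s) (sq_nonneg ε)]
        refine (expect_trunc_mul (κ := s ^ 2 * corr v v') hq hε hε1' hNF (hX v) (hX v') hpos
          (hpair v v') (B := 1 + |Real.exp (N1 * (ε ^ 2 * s ^ 2) * corr v v') - 1|) ?_ T).trans ?_
        · intro j hj
          have := pow_le_one_add_abs_exp hpos hj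
          convert this using 5
          ring
        · refine mul_le_mul_of_nonneg_right ?_ (by positivity)
          calc (1 + ε ^ 2) ^ N2 ≤ Real.exp (ε ^ 2) ^ N2 :=
                pow_le_pow_left₀ (by positivity) (by linarith [Real.add_one_le_exp (ε ^ 2)]) _
            _ = Real.exp (N2 * ε ^ 2) := by rw [← Real.exp_nat_mul]
            _ ≤ Real.exp (1 / 50) := Real.exp_le_exp.2 hN2
            _ ≤ _ := exp_small
      refine (Finset.sum_le_sum fun v' _ => hpt v').trans ?_
      rw [← Finset.mul_sum]
      have := mgf_bound hK v (N1 * (ε ^ 2 * s ^ 2)) (by positivity) hN1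
      linarith
    calc _ ≤ c * (c * ∑ _v : Fin K → Bool, (1 : ℝ) * (2 ^ K * 1.15 * 1.0203)) := by
          gcongr with v _
          rw [one_mul]
          exact hb v
      _ = (c * 2 ^ K) * (c * 2 ^ K) * (1.15 * 1.0203) := by
          rw [← Finset.sum_mul, hcard]; ring
      _ ≤ _ := by rw [hcc]; norm_num
  -- the average over `v` of the perturbed expectations dominates the truncated mixture
  have hkey : ∀ l, Y l - (cnt N l : ℝ) * (1 / (N1 + 1)) - (cnt F l : ℝ) * (1 / (N2 + 1)) -
      (1 / 0.84 * (Lb l * Lb l) - 2 / 0.84 * Lb l + (1 / 0.84 + 0.21)) ≤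
      c * ∑ v, (l.map fun x => 1 + ε * X v x).prod * Y l := by
    intro l
    have hprod : ∀ v, 0 ≤ (l.map fun x => 1 + ε * X v x).prod := by
      intro v
      apply List.prod_nonneg
      intro y hy
      obtain ⟨x, _, rfl⟩ := List.mem_map.1 hy
      have := abs_le.1 (hX v x)
      nlinarith
    have hquad : |Lb l - 1| ≤ 1 / 0.84 * (Lb l * Lb l) - 2 / 0.84 * Lb l + (1 / 0.84 + 0.21) := by
      have := sq_nonneg (|Lb l - 1| - 0.42)
      have h2 := sq_abs (Lb l - 1)
      have : |Lb l - 1| ≤ ((Lb l - 1) ^ 2 + 0.42 ^ 2) / 0.84 := by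
        rw [le_div_iff₀ (by norm_num)]; nlinarith
      refine this.trans (le_of_eq ?_)
      ring
    have hab := abs_le.1 (le_refl |Lb l - 1|)
    have hy0 := hY0 l
    have hy1 := hY1 l
    have hn1 : (0 : ℝ) ≤ (cnt N l : ℝ) * (1 / (N1 + 1)) := by positivity
    have hn2 : (0 : ℝ) ≤ (cnt F l : ℝ) * (1 / (N2 + 1)) := by positivity
    by_cases hg : cnt N l ≤ N1 ∧ cnt F l ≤ N2
    · have e : ∀ v, (l.map fun x => 1 + ε * X v x).prod = L v l := fun v =>
        (trunc_eq hNF (hX0 v) l hg.1 hg.2).symm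
      simp only [e]
      have e2 : c * ∑ v, L v l * Y l = Lb l * Y l := by
        rw [← Finset.sum_mul, ← mul_assoc]
      rw [e2]
      nlinarith
    · have h0 : 0 ≤ c * ∑ v, (l.map fun x => 1 + ε * X v x).prod * Y l :=
        mul_nonneg hcpos.le (Finset.sum_nonneg fun v _ => mul_nonneg (hprod v) hy0)
      have h1 : 1 ≤ (cnt N l : ℝ) * (1 / (N1 + 1)) + (cnt F l : ℝ) * (1 / (N2 + 1)) := by
        rw [not_and_or, not_le, not_le] at hg
        rcases hg with hg | hg
        · have : (1 : ℝ) ≤ (cnt N l : ℝ) * (1 / (N1 + 1)) := by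
            rw [mul_one_div, le_div_iff₀ (by positivity), one_mul]
            exact_mod_cast hg
          linarith
        · have : (1 : ℝ) ≤ (cnt F l : ℝ) * (1 / (N2 + 1)) := by
            rw [mul_one_div, le_div_iff₀ (by positivity), one_mul]
            exact_mod_cast hg
          linarith
      linarith [abs_nonneg (Lb l - 1)]
  have hE := expect_mono hq T _ _ hkey
  have hup : expect q T (fun l => c * ∑ v, (l.map fun x => 1 + ε * X v x).prod * Y l) ≤ 1 / 4 := by
    rw [expect_mul, expect_sum]
    calc _ ≤ c * ∑ _v : Fin K → Bool, (1 : ℝ) * (1 / 4) := by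
          gcongr with v _
          rw [one_mul, ← expect_change]
          exact hsmall v
      _ = _ := by rw [← Finset.sum_mul, hcard, ← mul_assoc, hcc, one_mul]
  have hlow : expect q T (fun l => Y l - (cnt N l : ℝ) * (1 / (N1 + 1)) -
      (cnt F l : ℝ) * (1 / (N2 + 1)) -
      (1 / 0.84 * (Lb l * Lb l) - 2 / 0.84 * Lb l + (1 / 0.84 + 0.21))) =
      expect q T Y - expect q T (fun l => (cnt N l : ℝ)) / (N1 + 1) -
      expect q T (fun l => (cnt F l : ℝ)) / (N2 + 1) -
      (1 / 0.84 * expect q T (fun l => Lb l * Lb l) - 2 / 0.84 * 1 + (1 / 0.84 + 0.21)) := by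
    rw [expect_sub, expect_sub, expect_sub, expect_add, expect_sub, expect_mul, expect_mul,
      expect_const hs, hEL]
    simp only [mul_comm _ (1 / ((N1 : ℝ) + 1)), mul_comm _ (1 / ((N2 : ℝ) + 1)), expect_mul]
    ring
  have := (hlow ▸ hE).trans hup
  have h42 : 1 / 0.84 * expect q T (fun l => Lb l * Lb l) - 2 / 0.84 * 1 + (1 / 0.84 + 0.21)
      ≤ (0.42 : ℝ) := by
    norm_num at hEL2 ⊢
    linarith
  linarith

/-- The statistical core.  The reference process is `q`; the perturbed processes are indexed by an
entry `e`, a password `w` and a sign vector `v`.  If the reference process reveals rarely enough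
and lasts few enough episodes, then some perturbed process keeps the failure indicator `Y` large.
-/
theorem core {E P : Type} [Fintype E] [Fintype P] {K : ℕ} (hK : 1 ≤ K) {q : List τ → τ → ℝ}
    (hq : ∀ l x, 0 ≤ q l x) (hs : ∀ l, ∑ x, q l x = 1) {s : ℝ} (hε : 0 ≤ ε) (hε1 : ε ≤ 0.1)
    (hs0 : 0 ≤ s) (hs1 : s ≤ 1) (hN1 : N1 * (ε ^ 2 * s ^ 2) ≤ Real.sqrt K / 10)
    (hN2 : N2 * ε ^ 2 ≤ 1 / 50) {N F : E × P → τ → ℕ} {X : E × P → (Fin K → Bool) → τ → ℝ}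
    (hNF : ∀ θ x, N θ x + F θ x ≤ 1) (hX : ∀ θ v x, |X θ v x| ≤ 1)
    (hX0 : ∀ θ v x, N θ x + F θ x = 0 → X θ v x = 0)
    (hone : ∀ θ v l (c1 c2 : ℝ), ∑ x, q l x * (1 + (c1 * N θ x + c2 * F θ x) * X θ v x) = 1)
    (hpair : ∀ θ v v' l (c1 c2 : ℝ), 0 < 1 + (s ^ 2 * corr v v') * c1 ^ 2 →
      ∑ x, q l x * ((1 + (c1 * N θ x + c2 * F θ x) * X θ v x) *
        (1 + (c1 * N θ x + c2 * F θ x) * X θ v' x) /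
        ((1 + (s ^ 2 * corr v v') * c1 ^ 2) ^ N θ x * (1 + c2 ^ 2) ^ F θ x)) = 1)
    {rev : τ → ℕ} (hrev : ∀ w x, ∑ e, N (e, w) x ≤ rev x) (hF : ∀ x, ∑ θ, F θ x ≤ 1) (T : ℕ)
    (hR : expect q T (fun l => (cnt rev l : ℝ)) ≤ Fintype.card E * (N1 + 1) / 8)
    (hT : (T : ℝ) ≤ Fintype.card (E × P) * (N2 + 1) / 8) (h32 : 32 ≤ Fintype.card (E × P))
    {Y : E × P → List τ → ℝ} (hY0 : ∀ θ l, 0 ≤ Y θ l) (hY1 : ∀ θ l, Y θ l ≤ 1)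
    (hYs : ∀ l, ∑ θ, (1 - Y θ l) ≤ 4 / 3) :
    ∃ θ v, 1 / 4 < expect (fun l x => q l x * (1 + ε * X θ v x)) T (Y θ) := by
  by_contra hcon
  push Not at hcon
  have hθ := fun θ => mixture_lower hK hq hs hε hε1 hs0 hs1 hN1 hN2 (hNF θ) (hX θ) (hX0 θ)
    (hone θ) (hpair θ) (hY0 θ) (hY1 θ) T (hcon θ)
  have hsum := Finset.sum_le_sum fun θ (_ : θ ∈ Finset.univ) => hθ θ
  simp only [Finset.sum_sub_distrib, ← Finset.sum_div, ← expect_sum, Finset.sum_const,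
    Finset.card_univ, nsmul_eq_mul] at hsum
  set C : ℝ := (Fintype.card (E × P) : ℝ) with hC
  have hC32 : (32 : ℝ) ≤ C := by rw [hC]; exact_mod_cast h32
  have hCmul : C = Fintype.card E * Fintype.card P := by rw [hC]; simp
  have h1 : C - 4 / 3 ≤ expect q T (fun l => ∑ θ, Y θ l) := by
    have := expect_mono hq T (fun _ => C - 4 / 3) (fun l => ∑ θ, Y θ l) (fun l => by
      have := hYs l
      rw [Finset.sum_sub_distrib] at this
      simp only [Finset.sum_const, Finset.card_univ, nsmul_eq_mul, mul_one, ← hC] at this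
      linarith)
    rwa [expect_const hs] at this
  have hcs : ∀ {ι : Type} [Fintype ι] (f : ι → τ → ℕ) (l : List τ),
      ∑ i, cnt (f i) l = cnt (fun x => ∑ i, f i x) l := by
    intro ι _ f l
    induction l with
    | nil => simp [cnt]
    | cons x l ih =>
      simp only [cnt, List.map_cons, List.sum_cons, Finset.sum_add_distrib] at ih ⊢
      rw [ih]
  have hcm : ∀ {f g : τ → ℕ} (_ : ∀ x, f x ≤ g x) (l : List τ), cnt f l ≤ cnt g l := by
    intro f g h l
    exact List.sum_le_sum fun x _ => h x
  have h2 : expect q T (fun l => ∑ θ, (cnt (N θ) l : ℝ)) ≤ C * (N1 + 1) / 8 := by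
    calc _ ≤ expect q T (fun l => (Fintype.card P : ℝ) * (cnt rev l : ℝ)) := by
          refine expect_mono hq T _ _ fun l => ?_
          rw [Fintype.sum_prod_type, Finset.sum_comm]
          calc _ ≤ ∑ _w : P, (cnt rev l : ℝ) := by
                refine Finset.sum_le_sum fun w _ => ?_
                have := (hcs (fun e => N (e, w)) l).le.trans (hcm (hrev w) l)
                exact_mod_cast this
            _ = _ := by simp
      _ ≤ _ := by
          rw [expect_mul, hCmul]
          have := mul_le_mul_of_nonneg_left hR (Nat.cast_nonneg (α := ℝ) (Fintype.card P))
          linarith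
  have h3 : expect q T (fun l => ∑ θ, (cnt (F θ) l : ℝ)) ≤ C * (N2 + 1) / 8 := by
    refine le_trans ?_ hT
    rw [← expect_length hs T]
    refine expect_mono hq T _ _ fun l => ?_
    have := (hcs F l).le.trans (hcm hF l)
    have h1 : cnt (fun _ : τ => 1) l = l.length := by simp [cnt]
    rw [h1] at this
    exact_mod_cast this
  have h2' : expect q T (fun l => ∑ θ, (cnt (N θ) l : ℝ)) / (N1 + 1) ≤ C / 8 := by
    rw [div_le_iff₀ (by positivity)]; linarith
  have h3' : expect q T (fun l => ∑ θ, (cnt (F θ) l : ℝ)) / (N2 + 1) ≤ C / 8 := by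
    rw [div_le_iff₀ (by positivity)]; linarith
  norm_num at hsum
  linarith

end Core

end HardFam

namespace HardFam

/-! ### Deterministic automata with random emissions -/

section Signal

variable {St C O A : Type}

/-- The signal carried by a trajectory: the class of the first state at which `cls` is defined,
together with the observation made there. -/
def sig (cls : ℕ → St → Option C) (nx : ℕ → St → A → St) :
    ℕ → St → List (O × A) → Option (C × O)
  | _, _, [] => none
  | h, st, p :: l =>
    match cls h st with
    | some c => some (c, p.1)
    | none => sig cls nx (h + 1) (nx h st p.2) l

variable {cls : ℕ → St → Option C} {nx : ℕ → St → A → St}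

lemma sig_some {h : ℕ} {st : St} {c : C} (hc : cls h st = some c) (p : O × A)
    (l : List (O × A)) : sig cls nx h st (p :: l) = some (c, p.1) := by
  simp [sig, hc]

lemma sig_none {h : ℕ} {st : St} (hc : cls h st = none) (p : O × A)
    (l : List (O × A)) : sig cls nx h st (p :: l) = sig cls nx (h + 1) (nx h st p.2) l := by
  simp [sig, hc]

end Signal

section Automaton

variable {S St C O A : Type} [Fintype S] [Fintype O] [Fintype A] {H : ℕ}

/-- Expectation of `G`, a function of the remaining trajectory, over `k` further steps played by
`π` from state `st` at step `h` after the history `hist`, when the latent state moves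
deterministically by `nx` and emits by `em`. -/
def EX (em : ℕ → St → O → ℝ) (nx : ℕ → St → A → St) (π : Policy O A) :
    ℕ → ℕ → List (O × A) → St → (List (O × A) → ℝ) → ℝ
  | 0, _, _, _, G => G []
  | k + 1, h, hist, st, G =>
    ∑ o, em h st o * ∑ a, π.act hist o a *
      EX em nx π k (h + 1) (hist ++ [(o, a)]) (nx h st a) (fun l => G ((o, a) :: l))

variable {em em' : ℕ → St → O → ℝ} {nx nx' : ℕ → St → A → St} {π : Policy O A}

lemma EX_congr_nx (k : ℕ) : ∀ (h : ℕ) (hist : List (O × A)) (st : St) (G : List (O × A) → ℝ),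
    (∀ g, h ≤ g → nx g = nx' g) → EX em nx π k h hist st G = EX em nx' π k h hist st G := by
  induction k with
  | zero => intros; rfl
  | succ k ih =>
    intro h hist st G hh
    simp only [EX]
    refine Finset.sum_congr rfl fun o _ => ?_
    congr 1
    refine Finset.sum_congr rfl fun a _ => ?_
    rw [hh h le_rfl, ih _ _ _ _ fun g hg => hh g (by omega)]

lemma EX_const (hem : ∀ h st, ∑ o, em h st o = 1) (c : ℝ) (k : ℕ) :
    ∀ (h : ℕ) (hist : List (O × A)) (st : St), EX em nx π k h hist st (fun _ => c) = c := by
  induction k with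
  | zero => intros; rfl
  | succ k ih => intro h hist st; simp [EX, ih, ← Finset.sum_mul, π.act_sum, hem]

lemma EX_smul (c : ℝ) (k : ℕ) :
    ∀ (h : ℕ) (hist : List (O × A)) (st : St) (G : List (O × A) → ℝ),
      EX em nx π k h hist st (fun l => c * G l) = c * EX em nx π k h hist st G := by
  induction k with
  | zero => intros; rfl
  | succ k ih =>
    intro h hist st G
    simp only [EX, ih, Finset.mul_sum]
    exact Finset.sum_congr rfl fun o _ => Finset.sum_congr rfl fun a _ => by ring

lemma EX_add (k : ℕ) :
    ∀ (h : ℕ) (hist : List (O × A)) (st : St) (G G' : List (O × A) → ℝ),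
      EX em nx π k h hist st (fun l => G l + G' l) =
        EX em nx π k h hist st G + EX em nx π k h hist st G' := by
  induction k with
  | zero => intros; rfl
  | succ k ih =>
    intro h hist st G G'
    simp only [EX, ih, mul_add, Finset.sum_add_distrib]

/-- A model whose transition is the `b`-mixture of two deterministic transitions that differ at a
single step has the `b`-mixture of the two laws. -/
lemma rollout_mix [DecidableEq St] (M : POMDP S O A H) (eS : S ≃ St) {nx0 nx1 : ℕ → St → A → St}
    {b : ℝ} {hs : ℕ} (hdiff : ∀ h, h ≠ hs → nx0 h = nx1 h)
    (hemit : ∀ h s o, M.emit h s o = em h (eS s) o)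
    (htr : ∀ h s a s', M.trans h s a s' = (1 - b) * (if eS s' = nx0 h (eS s) a then 1 else 0) +
      b * (if eS s' = nx1 h (eS s) a then 1 else 0)) (k : ℕ) :
    ∀ (h : ℕ) (hist : List (O × A)) (s : S) (G : List (O × A) → ℝ),
      rollout M π k h hist s G = (1 - b) * EX em nx0 π k h hist (eS s) G +
        b * EX em nx1 π k h hist (eS s) G := by
  induction k with
  | zero => intro h hist s G; simp only [rollout, EX]; ring
  | succ k ih =>
    intro h hist s G
    have hsum : ∀ (a : A) (f : St → ℝ), ∑ s', M.trans h s a s' * f (eS s') =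
        (1 - b) * f (nx0 h (eS s) a) + b * f (nx1 h (eS s) a) := by
      intro a f
      classical
      simp only [htr, add_mul, Finset.sum_add_distrib, mul_assoc, ← Finset.mul_sum, ite_mul,
        one_mul, zero_mul, ← Equiv.eq_symm_apply]
      simp
    simp only [EX, rollout, hemit]
    rw [Finset.mul_sum, Finset.mul_sum, ← Finset.sum_add_distrib]
    refine Finset.sum_congr rfl fun o _ => ?_
    rw [mul_left_comm, mul_left_comm b, ← mul_add, Finset.mul_sum (a := 1 - b),
      Finset.mul_sum (a := b), ← Finset.sum_add_distrib]
    congr 1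
    refine Finset.sum_congr rfl fun a _ => ?_
    rw [mul_left_comm, mul_left_comm b, ← mul_add]
    congr 1
    simp only [ih]
    rw [hsum a (fun st => (1 - b) * EX em nx0 π k (h + 1) (hist ++ [(o, a)]) st
      (fun l => G ((o, a) :: l)) + b * EX em nx1 π k (h + 1) (hist ++ [(o, a)]) st
      (fun l => G ((o, a) :: l)))]
    by_cases hh : h = hs
    · have hc : ∀ st, EX em nx0 π k (h + 1) (hist ++ [(o, a)]) st (fun l => G ((o, a) :: l)) =
          EX em nx1 π k (h + 1) (hist ++ [(o, a)]) st (fun l => G ((o, a) :: l)) := fun st =>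
        EX_congr_nx k _ _ _ _ fun g hg => hdiff g (by omega)
      simp only [hc]
      ring
    · rw [hdiff h hh]
      ring

variable {cls : ℕ → St → Option C}

/-- If two emission kernels differ only at the signal, by the factor `R`, then the corresponding
laws differ by the factor `R` evaluated at the signal.  `D` is a set of states after the signal. -/
lemma EX_reweight {R : Option (C × O) → ℝ} (hR0 : R none = 1) (D : ℕ → St → Prop)
    (hD1 : ∀ h st, D h st → cls h st = none)
    (hD2 : ∀ h st a, D h st → D (h + 1) (nx h st a))
    (hD3 : ∀ h st c a, cls h st = some c → D (h + 1) (nx h st a))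
    (he0 : ∀ h st o, cls h st = none → em' h st o = em h st o)
    (he1 : ∀ h st o c, cls h st = some c → em' h st o = em h st o * R (some (c, o))) (k : ℕ) :
    ∀ (h : ℕ) (hist : List (O × A)) (st : St) (G : List (O × A) → ℝ),
      EX em' nx π k h hist st G =
        EX em nx π k h hist st (fun l => R (sig cls nx h st l) * G l) := by
  have hdead : ∀ (k h : ℕ) (hist : List (O × A)) (st : St) (G : List (O × A) → ℝ), D h st →
      EX em' nx π k h hist st G = EX em nx π k h hist st G := by
    intro k
    induction k with
    | zero => intros; rfl
    | succ k ih =>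
      intro h hist st G hd
      simp only [EX, he0 h st _ (hD1 h st hd)]
      refine Finset.sum_congr rfl fun o _ => ?_
      congr 1
      refine Finset.sum_congr rfl fun a _ => ?_
      rw [ih _ _ _ _ (hD2 h st a hd)]
  induction k with
  | zero => intro h hist st G; simp [EX, sig, hR0]
  | succ k ih =>
    intro h hist st G
    simp only [EX]
    refine Finset.sum_congr rfl fun o _ => ?_
    rcases hc : cls h st with _ | c
    · simp only [he0 h st o hc, sig_none hc, ih]
    · simp only [he1 h st o c hc, sig_some hc, EX_smul]
      rw [mul_assoc, Finset.mul_sum]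
      congr 1
      refine Finset.sum_congr rfl fun a _ => ?_
      rw [hdead _ _ _ _ _ (hD3 h st c a hc)]
      ring

/-- Functions of the signal with the same conditional means given the class have the same
expectation. -/
lemma EX_sig_congr (hem : ∀ h st, ∑ o, em h st o = 1) {φ ψ : Option (C × O) → ℝ}
    (h0 : φ none = ψ none)
    (h1 : ∀ h st c, cls h st = some c →
      ∑ o, em h st o * φ (some (c, o)) = ∑ o, em h st o * ψ (some (c, o))) (k : ℕ) :
    ∀ (h : ℕ) (hist : List (O × A)) (st : St),
      EX em nx π k h hist st (fun l => φ (sig cls nx h st l)) =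
        EX em nx π k h hist st (fun l => ψ (sig cls nx h st l)) := by
  induction k with
  | zero => intro h hist st; simp [EX, sig, h0]
  | succ k ih =>
    intro h hist st
    simp only [EX]
    rcases hc : cls h st with _ | c
    · simp only [sig_none hc, ih]
    · simp only [sig_some hc, EX_const hem, ← Finset.sum_mul, π.act_sum, one_mul]
      exact h1 h st c hc

/-- Projecting the state by `f` does not change the law if emissions and transitions factor. -/
lemma EX_project {f : St → St} (hem : ∀ h st o, em h (f st) o = em h st o)
    (hnx : ∀ h st a, f (nx h st a) = nx' h (f st) a) (k : ℕ) :
    ∀ (h : ℕ) (hist : List (O × A)) (st : St) (G : List (O × A) → ℝ),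
      EX em nx π k h hist st G = EX em nx' π k h hist (f st) G := by
  induction k with
  | zero => intros; rfl
  | succ k ih =>
    intro h hist st G
    simp only [EX, hem, ← hnx, ih]

/-- Two automata with the same emissions and moves on an invariant set of states have the same
law from there. -/
lemma EX_invariant {I : St → Prop} (hem : ∀ h st o, I st → em' h st o = em h st o)
    (hnx : ∀ h st a, I st → nx h st a = nx' h st a ∧ I (nx h st a)) (k : ℕ) :
    ∀ (h : ℕ) (hist : List (O × A)) (st : St) (G : List (O × A) → ℝ), I st →
      EX em' nx π k h hist st G = EX em nx' π k h hist st G := by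
  induction k with
  | zero => intros; rfl
  | succ k ih =>
    intro h hist st G hI
    simp only [EX]
    refine Finset.sum_congr rfl fun o _ => ?_
    rw [hem h st o hI]
    congr 1
    refine Finset.sum_congr rfl fun a _ => ?_
    rw [ih _ _ _ _ (hnx h st a hI).2, (hnx h st a hI).1]

/-- Equality of expectations of all functions of the trajectory gives equality of the laws. -/
lemma trajProb_of_expect {M M' : POMDP S O A H} {r : List (O × A) → ℝ}
    (h : ∀ G : List (O × A) → ℝ, ∑ τ, M.trajProb π τ * G (List.ofFn τ) =
      ∑ τ, M'.trajProb π τ * (r (List.ofFn τ) * G (List.ofFn τ))) (τ : Fin H → O × A) :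
    M.trajProb π τ = M'.trajProb π τ * r (List.ofFn τ) := by
  classical
  have := h (fun l => if l = List.ofFn τ then 1 else 0)
  simpa [List.ofFn_injective.eq_iff] using this

end Automaton
end HardFam

namespace HardFam

/-! ### The hard family -/

/-- Latent states: `N` tree nodes, the lock, the emitting state (both with a flag recording whether
the secret entry was used) and a terminal state. -/
inductive St (N : ℕ)
  | tree (i : Fin N)
  | lock (f : Bool)
  | emt (f : Bool)
  | term

/-- Observations. -/
inductive Ob (N K : ℕ)
  | tree (i : Fin N)
  | lock
  | good
  | bad
  | term
  | sgn (k : Fin K) (g : Bool)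

/-- `St N` as a sum type. -/
def stEquiv (N : ℕ) : St N ≃ Fin N ⊕ Bool ⊕ Bool ⊕ Unit where
  toFun
    | .tree i => .inl i
    | .lock f => .inr (.inl f)
    | .emt f => .inr (.inr (.inl f))
    | .term => .inr (.inr (.inr ()))
  invFun
    | .inl i => .tree i
    | .inr (.inl f) => .lock f
    | .inr (.inr (.inl f)) => .emt f
    | .inr (.inr (.inr ())) => .term
  left_inv x := by cases x <;> rfl
  right_inv x := by rcases x with _ | _ | _ | _ <;> rfl

instance (N : ℕ) : DecidableEq (St N) := (stEquiv N).decidableEq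

/-- `Ob N K` as a sum type. -/
def obEquiv (N K : ℕ) : Ob N K ≃ Fin N ⊕ (Unit ⊕ Unit ⊕ Unit ⊕ Unit) ⊕ (Fin K × Bool) where
  toFun
    | .tree i => .inl i
    | .lock => .inr (.inl (.inl ()))
    | .good => .inr (.inl (.inr (.inl ())))
    | .bad => .inr (.inl (.inr (.inr (.inl ()))))
    | .term => .inr (.inl (.inr (.inr (.inr ()))))
    | .sgn k g => .inr (.inr (k, g))
  invFun
    | .inl i => .tree i
    | .inr (.inl (.inl ())) => .lock
    | .inr (.inl (.inr (.inl ()))) => .good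
    | .inr (.inl (.inr (.inr (.inl ())))) => .bad
    | .inr (.inl (.inr (.inr (.inr ())))) => .term
    | .inr (.inr (k, g)) => .sgn k g
  left_inv x := by cases x <;> rfl
  right_inv x := by rcases x with _ | (_ | _ | _ | _) | _ <;> rfl

instance (N K : ℕ) : DecidableEq (Ob N K) := (obEquiv N K).decidableEq

instance (N : ℕ) : Fintype (St N) := Fintype.ofEquiv _ (stEquiv N).symm
instance (N K : ℕ) : Fintype (Ob N K) := Fintype.ofEquiv _ (obEquiv N K).symm

lemma card_St (N : ℕ) : Fintype.card (St N) = N + 5 := by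
  rw [Fintype.card_congr (stEquiv N)]; simp

lemma card_Ob (N K : ℕ) : Fintype.card (Ob N K) = N + 4 + 2 * K := by
  rw [Fintype.card_congr (obEquiv N K)]; simp; ring

lemma sum_St {N : ℕ} (f : St N → ℝ) : ∑ x, f x = ∑ i, f (.tree i) +
    (f (.lock true) + f (.lock false) + (f (.emt true) + f (.emt false) + f .term)) := by
  rw [← (stEquiv N).symm.sum_comp]
  simp [Fintype.sum_sum_type, stEquiv]

lemma sum_Ob {N K : ℕ} (f : Ob N K → ℝ) : ∑ x, f x = ∑ i, f (.tree i) +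
    (f .lock + (f .good + (f .bad + f .term)) +
      ∑ k, (f (.sgn k true) + f (.sgn k false))) := by
  rw [← (obEquiv N K).symm.sum_comp]
  simp [Fintype.sum_sum_type, obEquiv, Fintype.sum_prod_type]

/-- The sizes of the construction. -/
structure Par where
  n : ℕ
  K : ℕ
  A : ℕ
  H : ℕ
  hn : 1 ≤ n
  hK : 2 ≤ K
  hA : 3 ≤ A
  hH : 8 * n + 2 ≤ H

namespace Par

variable (p : Par)

/-- Number of tree nodes. -/
abbrev N : ℕ := 2 ^ p.n - 1
/-- Actions below `r` reveal the lock. -/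
abbrev r : ℕ := p.A / 3
/-- Last step at which the lock can be entered with the flag. -/
abbrev hmax : ℕ := p.H / 5
/-- Length of the password. -/
abbrev L : ℕ := p.H - 1 - p.hmax
/-- Secret entries: step (offset by `n`), node, action (offset by `2`). -/
abbrev Ent : Type := Fin (p.hmax - p.n + 1) × Fin (2 ^ (p.n - 1)) × Fin (p.A - 2)
/-- Passwords: actions (offset by `r`) at the steps `hmax < h < H`. -/
abbrev Pw : Type := Fin p.L → Fin (p.A - p.r)
/-- Raw latent states. -/
abbrev S : Type := Fin (2 ^ p.n + 4)
/-- Raw observations. -/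
abbrev O : Type := Fin (2 ^ p.n + 2 * p.K + 3)

lemma two_le_pow : 2 ≤ 2 ^ p.n := by
  calc 2 = 2 ^ 1 := rfl
    _ ≤ 2 ^ p.n := Nat.pow_le_pow_right (by norm_num) p.hn

lemma N_pos : 0 < p.N := by have := p.two_le_pow; simp only [N]; omega

lemma half_le_N : 2 ^ (p.n - 1) ≤ p.N := by
  have h : 2 ^ p.n = 2 * 2 ^ (p.n - 1) := by
    rw [← pow_succ']; congr 1; have := p.hn; omega
  have : 1 ≤ 2 ^ (p.n - 1) := Nat.one_le_two_pow
  simp only [N]; omega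

/-- Decoding of raw states. -/
def eS : p.S ≃ St p.N := Fintype.equivOfCardEq (by
  have := p.two_le_pow
  rw [card_St, Fintype.card_fin]; simp only [N]; omega)

/-- Decoding of raw observations. -/
def eO : p.O ≃ Ob p.N p.K := Fintype.equivOfCardEq (by
  have := p.two_le_pow
  rw [card_Ob, Fintype.card_fin]; simp only [N]; omega)

/-- The action `a` at node `i` of step `h` is the secret entry. -/
def isEnt (e : p.Ent) (h : ℕ) (i : Fin p.N) (a : Fin p.A) : Prop :=
  h = p.n + e.1.1 ∧ i.1 = e.2.1.1 ∧ a.1 = 2 + e.2.2.1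

instance (e : p.Ent) (h : ℕ) (i : Fin p.N) (a : Fin p.A) : Decidable (p.isEnt e h i a) := by
  unfold isEnt; infer_instance

/-- The action `a` at step `h` is compatible with the password. -/
def okPw (w : p.Pw) (h : ℕ) (a : Fin p.A) : Prop :=
  ∀ j : Fin p.L, h = p.hmax + 1 + j.1 → a.1 = p.r + (w j).1

instance (w : p.Pw) (h : ℕ) (a : Fin p.A) : Decidable (p.okPw w h a) := by
  unfold okPw; infer_instance

/-- Moving down the tree. -/
def child (i : Fin p.N) (j : ℕ) : Fin p.N := if h : 2 * i.1 + j < p.N then ⟨2 * i.1 + j, h⟩ else i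

/-- Deterministic transition with parameters `θ`; `on` activates the secret entry. -/
def nx (on : Bool) (θ : p.Ent × p.Pw) (h : ℕ) : St p.N → Fin p.A → St p.N
  | .tree i, a => if a.1 < 2 then .tree (p.child i a.1) else
      if on = true ∧ p.isEnt θ.1 h i a then .lock true else .lock false
  | .lock f, a => if a.1 < p.r then .emt f else
      if f = true ∧ p.okPw θ.2 h a then .lock true else .lock false
  | .emt _, _ => .term
  | .term, _ => .term

/-- Transition of the reference automaton, which never sets the flag. -/
def nxb (_h : ℕ) : St p.N → Fin p.A → St p.N
  | .tree i, a => if a.1 < 2 then .tree (p.child i a.1) else .lock false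
  | .lock _, a => if a.1 < p.r then .emt false else .lock false
  | .emt _, _ => .term
  | .term, _ => .term

/-- Clearing the flag. -/
def forget : St p.N → St p.N
  | .lock _ => .lock false
  | .emt _ => .emt false
  | st => st

/-- Emission with sign vector `v` and signal strength `s`. -/
def em (s : ℝ) (v : Fin p.K → Bool) (h : ℕ) (st : St p.N) (x : Ob p.N p.K) : ℝ :=
  match st with
  | .tree i => if x = .tree i then 1 else 0
  | .lock f => if h = p.H then
      (if f then (if x = .good then 1 else 0)
        else (if x = .good then 1 / 2 else 0) + (if x = .bad then 1 / 2 else 0))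
      else if x = .lock then 1 else 0
  | .emt f => match x with
    | .sgn k g => (1 + (if f = true ∧ h ≤ p.H then s * (sg (v k) * sg g) else 0)) / (2 * p.K)
    | _ => 0
  | .term => if x = .term then 1 else 0

/-- Reference emission. -/
def em0 (h : ℕ) (st : St p.N) (x : Ob p.N p.K) : ℝ :=
  p.em 0 (fun _ => true) h (p.forget st) x

variable {p}

lemma K_pos : (0 : ℝ) < p.K := by have := p.hK; exact_mod_cast (by omega : 0 < p.K)

lemma em_sum (s : ℝ) (v : Fin p.K → Bool) (h : ℕ) (st : St p.N) : ∑ x, p.em s v h st x = 1 := by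
  have hK := K_pos (p := p)
  rw [sum_Ob]
  rcases st with i | f | f | _
  · simp [em]
  · rcases f <;> by_cases hh : h = p.H <;> simp [em, hh] <;> norm_num
  · have : ∀ k, p.em s v h (.emt f) (.sgn k true) + p.em s v h (.emt f) (.sgn k false) =
        1 / p.K := by
      intro k
      simp only [em]
      split_ifs <;> simp [sg] <;> field_simp <;> ring
    simp only [this]
    simp [em]
    field_simp
  · simp [em]

lemma em_nonneg {s : ℝ} (hs0 : 0 ≤ s) (hs1 : s ≤ 1) (v : Fin p.K → Bool) (h : ℕ) (st : St p.N)
    (x : Ob p.N p.K) : 0 ≤ p.em s v h st x := by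
  rcases st with i | f | f | _
  · simp only [em]; split_ifs <;> norm_num
  · simp only [em]; split_ifs <;> norm_num
  · rcases x with _ | _ | _ | _ | _ | ⟨k, g⟩ <;> simp only [em, le_refl]
    refine div_nonneg ?_ (by positivity)
    split_ifs
    · rcases v k <;> rcases g <;> simp [sg] <;> linarith
    · norm_num
  · simp only [em]; split_ifs <;> norm_num

lemma em0_sum (h : ℕ) (st : St p.N) : ∑ x, p.em0 h st x = 1 := em_sum _ _ _ _

end Par
end HardFam

/-! ### The models and their signals -/

namespace HardFam
namespace Par
variable {p : Par}

/-- The initial state. -/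
def root (p : Par) : St p.N := .tree ⟨0, p.N_pos⟩

/-- The POMDP with secret entry and password `θ`, sign vector `v`, signal strength `s`, in which
the secret entry works with probability `b`. -/
def mdl (p : Par) {s : ℝ} (hs : 0 ≤ s ∧ s ≤ 1) {b : ℝ} (hb : 0 ≤ b ∧ b ≤ 1) (θ : p.Ent × p.Pw)
    (v : Fin p.K → Bool) : POMDP p.S p.O (Fin p.A) p.H where
  init x := if p.eS x = p.root then 1 else 0
  init_nonneg x := by split_ifs <;> norm_num
  init_sum := by
    rw [p.eS.sum_comp (fun x => if x = p.root then (1 : ℝ) else 0)]; simp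
  trans h x a y := (1 - b) * (if p.eS y = p.nx false θ h (p.eS x) a then 1 else 0) +
      b * (if p.eS y = p.nx true θ h (p.eS x) a then 1 else 0)
  trans_nonneg h x a y := by
    have h1 : 0 ≤ 1 - b := by linarith [hb.2]
    have h2 := hb.1
    split_ifs <;> simp <;> linarith
  trans_sum h x a := by
    rw [p.eS.sum_comp (fun y => (1 - b) * (if y = p.nx false θ h (p.eS x) a then 1 else 0) +
      b * (if y = p.nx true θ h (p.eS x) a then 1 else 0))]
    simp [Finset.sum_add_distrib]
  emit h x o := p.em s v h (p.eS x) (p.eO o)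
  emit_nonneg h x o := em_nonneg hs.1 hs.2 _ _ _ _
  emit_sum h x := by
    rw [p.eO.sum_comp (fun o => p.em s v h (p.eS x) o)]; exact em_sum _ _ _ _
  reward h o _ := if h = p.H ∧ p.eO o = .good then 1 else 0
  reward_nonneg h o a := by split_ifs <;> norm_num
  reward_le_one h o a := by split_ifs <;> norm_num
  reward_total τ := by
    calc _ ≤ ∑ h : Fin p.H, (if h = ⟨p.H - 1, by have := p.hH; omega⟩ then (1 : ℝ) else 0) := by
          refine Finset.sum_le_sum fun h _ => ?_
          split_ifs with h1 h2 h2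
          · norm_num
          · exact absurd (Fin.ext (by simp; omega)) h2
          · norm_num
          · norm_num
      _ = 1 := by simp

/-- Classes of signals: a reveal, or reaching the lock at the last step, each with the flag. -/
inductive Cls
  | rev (f : Bool)
  | fin (f : Bool)

/-- The class of signal emitted by a state. -/
def cls (p : Par) (h : ℕ) : St p.N → Option Cls
  | .emt f => if h ≤ p.H then some (.rev f) else none
  | .lock f => if h = p.H then some (.fin f) else none
  | _ => none

/-- The signal of a trajectory under parameters `θ`. -/
def sg1 (p : Par) (θ : p.Ent × p.Pw) (l : List (p.O × Fin p.A)) : Option (Cls × p.O) :=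
  sig p.cls (p.nx true θ) 1 p.root l

/-- Relative excess of the likelihood at a signal. -/
def X (p : Par) (s : ℝ) (v : Fin p.K → Bool) : Option (Cls × p.O) → ℝ
  | some (.rev true, o) => match p.eO o with
    | .sgn k g => s * (sg (v k) * sg g)
    | _ => 0
  | some (.fin true, o) => match p.eO o with
    | .good => 1
    | .bad => -1
    | _ => 0
  | _ => 0

/-- Expectation in the reference model. -/
def E0 (p : Par) (π : Policy p.O (Fin p.A)) (G : List (p.O × Fin p.A) → ℝ) : ℝ :=
  EX (fun h st o => p.em0 h st (p.eO o)) p.nxb π p.H 1 [] p.root G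

lemma forget_nx (on : Bool) (θ : p.Ent × p.Pw) (h : ℕ) (st : St p.N) (a : Fin p.A) :
    p.forget (p.nx on θ h st a) = p.nxb h (p.forget st) a := by
  rcases st with i | f | f | _ <;> simp only [nx, nxb, forget] <;> split_ifs <;> rfl

lemma forget_forget (st : St p.N) : p.forget (p.forget st) = p.forget st := by
  rcases st with i | f | f | _ <;> rfl

lemma em_unflagged (s : ℝ) (v : Fin p.K → Bool) (h : ℕ) (st : St p.N) (x : Ob p.N p.K) :
    p.em s v h (p.forget st) x = p.em0 h st x := by
  rcases st with i | f | f | _ <;> simp [em, em0, forget]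

/-- In the reference automaton the flagged run has the same law. -/
lemma EX_em0 (θ : p.Ent × p.Pw) (π : Policy p.O (Fin p.A)) (G : List (p.O × Fin p.A) → ℝ) :
    EX (fun h st o => p.em0 h st (p.eO o)) (p.nx true θ) π p.H 1 [] p.root G = p.E0 π G := by
  have := EX_project (em := fun h st o => p.em0 h st (p.eO o)) (nx := p.nx true θ) (nx' := p.nxb)
    (π := π) (f := p.forget) (fun h st o => by simp only [em0, forget_forget])
    (fun h st a => forget_nx _ _ _ _ _) p.H 1 [] p.root G
  exact this

lemma em_rev (s : ℝ) (v : Fin p.K → Bool) (h : ℕ) (st : St p.N) (o : p.O) (c : Cls)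
    (hc : p.cls h st = some c) :
    p.em s v h st (p.eO o) = p.em0 h st (p.eO o) * (1 + p.X s v (some (c, o))) := by
  rcases st with i | f | f | _
  · simp [cls] at hc
  · simp only [cls] at hc
    split_ifs at hc with hh
    obtain rfl := Option.some.inj hc
    subst hh
    rcases f
    · simp [X, em, em0, forget]
    · rcases ho : p.eO o with _ | _ | _ | _ | _ | ⟨k, g⟩ <;> simp [X, em, em0, forget, ho]
      norm_num
  · simp only [cls] at hc
    split_ifs at hc with hh
    obtain rfl := Option.some.inj hc
    rcases f
    · rcases ho : p.eO o with _ | _ | _ | _ | _ | ⟨k, g⟩ <;> simp [X, em, em0, forget]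
    · rcases ho : p.eO o with _ | _ | _ | _ | _ | ⟨k, g⟩ <;> simp [X, em, em0, forget, ho, hh]
      ring
  · simp [cls] at hc

lemma em_nocls (s : ℝ) (v : Fin p.K → Bool) (h : ℕ) (st : St p.N) (x : Ob p.N p.K)
    (hc : p.cls h st = none) : p.em s v h st x = p.em0 h st x := by
  rcases st with i | f | f | _
  · simp [em, em0, forget]
  · simp only [cls] at hc
    split_ifs at hc with hh
    simp [em, em0, forget, hh]
  · simp only [cls] at hc
    split_ifs at hc with hh
    rcases x with _ | _ | _ | _ | _ | ⟨k, g⟩ <;> simp [em, em0, forget, hh]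
  · simp [em, em0, forget]

variable {s : ℝ} (hs : 0 ≤ s ∧ s ≤ 1) {b : ℝ} (hb : 0 ≤ b ∧ b ≤ 1)

/-- Likelihood ratio of the perturbed models against the reference. -/
lemma law (θ : p.Ent × p.Pw) (v : Fin p.K → Bool) (π : Policy p.O (Fin p.A))
    (G : List (p.O × Fin p.A) → ℝ) :
    ∑ τ, (p.mdl hs hb θ v).trajProb π τ * G (List.ofFn τ) =
      p.E0 π (fun l => (1 + b * p.X s v (p.sg1 θ l)) * G l) := by
  rw [sum_trajProb]
  have hmix := rollout_mix (π := π) (em := fun h st o => p.em s v h st (p.eO o))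
    (p.mdl hs hb θ v) p.eS (nx0 := p.nx false θ) (nx1 := p.nx true θ) (b := b)
    (hs := p.n + θ.1.1.1) (by
      intro h hh
      funext st a
      rcases st with i | f | f | _ <;> simp [nx, isEnt, hh])
    (fun h s o => rfl) (fun h s a s' => rfl)
  simp only [hmix]
  have hinit : ∀ f : St p.N → ℝ, ∑ x, (p.mdl hs hb θ v).init x * f (p.eS x) = f p.root := by
    intro f
    have : ∀ x, (p.mdl hs hb θ v).init x = if p.eS x = p.root then 1 else 0 := fun x => rfl
    simp only [this]
    rw [p.eS.sum_comp (fun y => (if y = p.root then 1 else 0) * f y)]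
    simp
  rw [hinit (fun st => (1 - b) * EX (fun h st o => p.em s v h st (p.eO o)) (p.nx false θ) π p.H 1
    [] st G + b * EX (fun h st o => p.em s v h st (p.eO o)) (p.nx true θ) π p.H 1 [] st G)]
  have h0 : EX (fun h st o => p.em s v h st (p.eO o)) (p.nx false θ) π p.H 1 [] p.root G =
      p.E0 π G := by
    refine EX_invariant (I := fun st => p.forget st = st) ?_ ?_ _ _ _ _ _ rfl
    · intro h st o hI
      have := em_unflagged s v h st (p.eO o)
      rw [hI] at this
      exact this
    · intro h st a hI
      have e : p.nx false θ h st a = p.nxb h st a := by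
        rcases st with i | f | f | _ <;> simp only [nx, nxb]
        · simp
        · simp only [forget, St.lock.injEq] at hI
          subst hI
          simp
      refine ⟨e, ?_⟩
      rw [forget_nx, hI, e]
  have h1 : EX (fun h st o => p.em s v h st (p.eO o)) (p.nx true θ) π p.H 1 [] p.root G =
      p.E0 π (fun l => (1 + p.X s v (p.sg1 θ l)) * G l) := by
    rw [← EX_em0 θ]
    refine EX_reweight (cls := p.cls) (R := fun c => 1 + p.X s v c) (by simp [X])
      (fun h st => st = .term ∨ p.H < h) ?_ ?_ ?_ ?_ ?_ _ _ _ _ _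
    · rintro h st (rfl | hh)
      · rfl
      · rcases st with i | f | f | _ <;> simp only [cls] <;> rw [if_neg (by omega)]
    · rintro h st a (rfl | hh)
      · exact Or.inl rfl
      · exact Or.inr (by omega)
    · intro h st c a hc
      rcases st with i | f | f | _
      · simp [cls] at hc
      · simp only [cls] at hc
        split_ifs at hc with hh
        exact Or.inr (by omega)
      · exact Or.inl rfl
      · simp [cls] at hc
    · intro h st o hc
      exact em_nocls _ _ _ _ _ hc
    · intro h st o c hc
      exact em_rev _ _ _ _ _ _ hc
  rw [h0, h1]
  unfold E0
  rw [← EX_smul, ← EX_smul, ← EX_add]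
  congr 1
  funext l
  ring

end Par
end HardFam

/-! ### Moments under the reference model -/

namespace HardFam

section Mono

variable {St O A : Type} [Fintype O] [Fintype A] {em : ℕ → St → O → ℝ} {nx : ℕ → St → A → St}
  {π : Policy O A}

lemma EX_mono (hem : ∀ h st o, 0 ≤ em h st o) (k : ℕ) :
    ∀ (h : ℕ) (hist : List (O × A)) (st : St) (G G' : List (O × A) → ℝ), (∀ l, G l ≤ G' l) →
      EX em nx π k h hist st G ≤ EX em nx π k h hist st G' := by
  induction k with
  | zero => intro h hist st G G' hG; exact hG _
  | succ k ih =>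
    intro h hist st G G' hG
    refine Finset.sum_le_sum fun o _ => mul_le_mul_of_nonneg_left ?_ (hem _ _ _)
    refine Finset.sum_le_sum fun a _ => mul_le_mul_of_nonneg_left ?_ (π.act_nonneg _ _ _)
    exact ih _ _ _ _ _ fun l => hG _

end Mono

namespace Par
variable {p : Par}

/-- Conditional mean of a function of the observation given the class of the signal, in the
reference model. -/
def mean (p : Par) (c : Cls) (φ : Ob p.N p.K → ℝ) : ℝ :=
  match c with
  | .rev _ => (∑ k, (φ (.sgn k true) + φ (.sgn k false))) / (2 * p.K)
  | .fin _ => (φ .good + φ .bad) / 2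

lemma em0_mean (φ : Ob p.N p.K → ℝ) {h : ℕ} {st : St p.N} {c : Cls} (hc : p.cls h st = some c) :
    ∑ o, p.em0 h st (p.eO o) * φ (p.eO o) = p.mean c φ := by
  rw [p.eO.sum_comp (fun x => p.em0 h st x * φ x), sum_Ob]
  rcases st with i | f | f | _
  · simp [cls] at hc
  · simp only [cls] at hc
    split_ifs at hc with hh
    obtain rfl := Option.some.inj hc
    simp [em0, em, forget, hh, mean]
    ring
  · simp only [cls] at hc
    split_ifs at hc with hh
    obtain rfl := Option.some.inj hc
    simp [em0, em, forget, mean, Finset.sum_div]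
    exact Finset.sum_congr rfl fun k _ => by ring
  · simp [cls] at hc

lemma E0_congr (θ : p.Ent × p.Pw) (π : Policy p.O (Fin p.A)) {φ ψ : Option (Cls × p.O) → ℝ}
    (h0 : φ none = ψ none)
    (h1 : ∀ c, p.mean c (fun x => φ (some (c, p.eO.symm x))) =
      p.mean c (fun x => ψ (some (c, p.eO.symm x)))) :
    p.E0 π (fun l => φ (p.sg1 θ l)) = p.E0 π (fun l => ψ (p.sg1 θ l)) := by
  rw [← EX_em0 θ, ← EX_em0 θ]
  refine EX_sig_congr (fun h st => ?_) h0 ?_ _ _ _ _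
  · rw [p.eO.sum_comp (fun x => p.em0 h st x)]; exact em0_sum _ _
  · intro h st c hc
    have := h1 c
    rw [← em0_mean _ hc, ← em0_mean _ hc] at this
    simpa using this

lemma E0_const (π : Policy p.O (Fin p.A)) (c : ℝ) : p.E0 π (fun _ => c) = c :=
  EX_const (fun h st => by
    rw [p.eO.sum_comp (fun x => p.em0 h st x)]; exact em0_sum _ _) _ _ _ _ _

lemma E0_mono (π : Policy p.O (Fin p.A)) {G G' : List (p.O × Fin p.A) → ℝ}
    (h : ∀ l, G l ≤ G' l) : p.E0 π G ≤ p.E0 π G' :=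
  EX_mono (fun _ _ _ => em_nonneg le_rfl zero_le_one _ _ _ _) _ _ _ _ _ _ h

lemma E0_add (π : Policy p.O (Fin p.A)) (G G' : List (p.O × Fin p.A) → ℝ) :
    p.E0 π (fun l => G l + G' l) = p.E0 π G + p.E0 π G' := EX_add _ _ _ _ _ _

lemma E0_smul (π : Policy p.O (Fin p.A)) (c : ℝ) (G : List (p.O × Fin p.A) → ℝ) :
    p.E0 π (fun l => c * G l) = c * p.E0 π G := EX_smul _ _ _ _ _ _

/-- Indicator of a flagged reveal. -/
def Nf : Option (Cls × p.O) → ℕ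
  | some (.rev true, _) => 1
  | _ => 0

/-- Indicator of holding the flagged lock at the last step. -/
def Ff : Option (Cls × p.O) → ℕ
  | some (.fin true, _) => 1
  | _ => 0

/-- Indicator of any reveal. -/
def Rf : Option (Cls × p.O) → ℕ
  | some (.rev _, _) => 1
  | _ => 0

lemma Nf_add_Ff (c : Option (Cls × p.O)) : Nf c + Ff c ≤ 1 := by
  rcases c with _ | ⟨_ | _, o⟩ <;> simp [Nf, Ff] <;> split <;> simp

lemma abs_X_le {s : ℝ} (hs : 0 ≤ s ∧ s ≤ 1) (v : Fin p.K → Bool) (c : Option (Cls × p.O)) :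
    |p.X s v c| ≤ 1 := by
  rcases c with _ | ⟨(_ | _) | (_ | _), o⟩ <;> simp only [X] <;> try norm_num
  · split
    · rw [abs_mul, abs_mul, abs_sg, abs_sg, abs_of_nonneg hs.1]; linarith [hs.2]
    · norm_num
  · split <;> norm_num

lemma X_zero (s : ℝ) (v : Fin p.K → Bool) (c : Option (Cls × p.O)) (h : Nf c + Ff c = 0) :
    p.X s v c = 0 := by
  rcases c with _ | ⟨(_ | _) | (_ | _), o⟩ <;> simp [X, Nf, Ff] at h ⊢

lemma E0_one (s : ℝ) (θ : p.Ent × p.Pw) (v : Fin p.K → Bool) (π : Policy p.O (Fin p.A))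
    (c1 c2 : ℝ) :
    p.E0 π (fun l => 1 + (c1 * Nf (p.sg1 θ l) + c2 * Ff (p.sg1 θ l)) * p.X s v (p.sg1 θ l)) =
      1 := by
  have hK := K_pos (p := p)
  rw [E0_congr θ π (φ := fun c => 1 + (c1 * Nf c + c2 * Ff c) * p.X s v c) (ψ := fun _ => 1),
    E0_const]
  · simp [X]
  · rintro ((_ | _) | (_ | _)) <;> simp [mean, X, Nf, Ff]
    · rw [Finset.sum_congr rfl (g := fun _ => (2 : ℝ)) (fun k _ => by simp [sg]; ring)]
      simp
      ring
    · ring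

lemma E0_pair (s : ℝ) (θ : p.Ent × p.Pw) (v v' : Fin p.K → Bool) (π : Policy p.O (Fin p.A))
    (c1 c2 : ℝ) (hpos : 0 < 1 + (s ^ 2 * corr v v') * c1 ^ 2) :
    p.E0 π (fun l => (1 + (c1 * Nf (p.sg1 θ l) + c2 * Ff (p.sg1 θ l)) * p.X s v (p.sg1 θ l)) *
      (1 + (c1 * Nf (p.sg1 θ l) + c2 * Ff (p.sg1 θ l)) * p.X s v' (p.sg1 θ l)) /
      ((1 + (s ^ 2 * corr v v') * c1 ^ 2) ^ Nf (p.sg1 θ l) * (1 + c2 ^ 2) ^ Ff (p.sg1 θ l))) =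
      1 := by
  have hK := K_pos (p := p)
  rw [E0_congr θ π (φ := fun c => (1 + (c1 * Nf c + c2 * Ff c) * p.X s v c) *
      (1 + (c1 * Nf c + c2 * Ff c) * p.X s v' c) /
      ((1 + (s ^ 2 * corr v v') * c1 ^ 2) ^ Nf c * (1 + c2 ^ 2) ^ Ff c)) (ψ := fun _ => 1),
    E0_const]
  · simp [X, Nf, Ff]
  · rintro ((_ | _) | (_ | _)) <;> simp [mean, X, Nf, Ff]
    · simp only [← add_div]
      have e : ∀ k, (1 + c1 * (s * (sg (v k) * sg true))) * (1 + c1 * (s * (sg (v' k) * sg true))) +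
          (1 + c1 * (s * (sg (v k) * sg false))) * (1 + c1 * (s * (sg (v' k) * sg false))) =
          2 + 2 * (c1 ^ 2 * s ^ 2) * (sg (v k) * sg (v' k)) := by
        intro k; rcases v k <;> rcases v' k <;> simp [sg] <;> ring
      simp only [e]
      rw [← Finset.sum_div, Finset.sum_add_distrib, ← Finset.mul_sum]
      have hc : ∑ k, sg (v k) * sg (v' k) = p.K * corr v v' := by unfold corr; field_simp
      rw [hc]
      simp only [Finset.sum_const, Finset.card_univ, Fintype.card_fin, nsmul_eq_mul]
      congr 1
      rw [div_eq_iff hpos.ne']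
      ring
    · have : (1 + c2 ^ 2) ≠ 0 := by positivity
      field_simp
      ring

end Par
end HardFam

namespace HardFam
namespace Par
variable {p : Par}

/-! ### Values -/

/-- Reward collected along a trajectory segment starting at step `h`. -/
def gd (p : Par) : ℕ → List (p.O × Fin p.A) → ℝ
  | _, [] => 0
  | h, q :: l => (if h = p.H ∧ p.eO q.1 = .good then 1 else 0) + gd p (h + 1) l

lemma gd_ofFn (k : ℕ) : ∀ (h : ℕ) (τ : Fin k → p.O × Fin p.A),
    ∑ i : Fin k, (if i.1 + h = p.H ∧ p.eO (τ i).1 = .good then (1 : ℝ) else 0) =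
      p.gd h (List.ofFn τ) := by
  induction k with
  | zero => intro h τ; simp [gd]
  | succ k ih =>
    intro h τ
    rw [Fin.sum_univ_succ, List.ofFn_succ, gd, ← ih]
    congr 1
    · simp
    · refine Finset.sum_congr rfl fun i _ => ?_
      have : i.succ.1 + h = i.1 + (h + 1) := by simp; omega
      rw [this]

/-- Reward as a function of the signal. -/
def φg (p : Par) : Option (Cls × p.O) → ℝ
  | some (.fin _, o) => if p.eO o = .good then 1 else 0
  | _ => 0

lemma sig_term (θ : p.Ent × p.Pw) (l : List (p.O × Fin p.A)) : ∀ h,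
    sig p.cls (p.nx true θ) h .term l = none := by
  induction l with
  | nil => intro h; rfl
  | cons q l ih => intro h; rw [sig_none (by rfl)]; exact ih _

/-- The reward is almost surely a function of the signal. -/
lemma EX_gd (θ : p.Ent × p.Pw) (π : Policy p.O (Fin p.A)) (k : ℕ) :
    ∀ (h : ℕ) (hist : List (p.O × Fin p.A)) (st : St p.N) (f : Option (Cls × p.O) → ℝ),
      k + h = p.H + 1 →
      EX (fun h st o => p.em0 h st (p.eO o)) (p.nx true θ) π k h hist st
        (fun l => f (sig p.cls (p.nx true θ) h st l) * p.gd h l) =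
      EX (fun h st o => p.em0 h st (p.eO o)) (p.nx true θ) π k h hist st
        (fun l => f (sig p.cls (p.nx true θ) h st l) * p.φg (sig p.cls (p.nx true θ) h st l)) := by
  induction k with
  | zero => intro h hist st f _; simp [EX, gd, sig, φg]
  | succ k ih =>
    intro h hist st f hk
    simp only [EX]
    refine Finset.sum_congr rfl fun o _ => ?_
    rcases st with i | g | g | _
    · by_cases ho : p.eO o = .tree i
      · simp only [gd, ho, sig_none (cls := p.cls) (st := .tree i) (nx := p.nx true θ) (h := h) rfl]
        simp only [reduceCtorEq, and_false, if_false, zero_add]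
        congr 1
        refine Finset.sum_congr rfl fun a _ => ?_
        rw [ih _ _ _ _ (by omega)]
      · simp [em0, forget, em, ho]
    · by_cases hh : h = p.H
      · obtain rfl : k = 0 := by omega
        have hc : p.cls h (.lock g) = some (.fin g) := by simp [cls, hh]
        simp only [EX, sig_some hc, gd, φg]
        simp only [hh, true_and, add_zero]
      · have hc : p.cls h (.lock g) = none := by simp [cls, hh]
        simp only [sig_none hc, gd, hh, false_and, if_false, zero_add]
        congr 1
        refine Finset.sum_congr rfl fun a _ => ?_
        rw [ih _ _ _ _ (by omega)]
    · have hc : p.cls h (.emt g) = some (.rev g) := by simp [cls]; omega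
      by_cases ho : p.eO o = .good
      · simp [em0, forget, em, ho]
      · simp only [sig_some hc, gd, φg, ho, and_false, if_false, zero_add, mul_zero]
        congr 1
        refine Finset.sum_congr rfl fun a _ => ?_
        congr 1
        have := ih (h + 1) (hist ++ [(o, a)]) .term (fun _ => f (some (.rev g, o))) (by omega)
        simp only [sig_term, φg, mul_zero] at this
        exact this
    · by_cases ho : p.eO o = .term
      · simp only [gd, ho, sig_none (cls := p.cls) (st := .term) (nx := p.nx true θ) (h := h) rfl]
        simp only [reduceCtorEq, and_false, if_false, zero_add]
        congr 1
        refine Finset.sum_congr rfl fun a _ => ?_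
        rw [ih _ _ _ _ (by omega)]
      · simp [em0, forget, em, ho]

/-- Conditional mean of the reward given the class of the signal. -/
def ψg (p : Par) (b : ℝ) : Option (Cls × p.O) → ℝ
  | some (.fin true, _) => (1 + b) / 2
  | some (.fin false, _) => 1 / 2
  | _ => 0

variable {s : ℝ} (hs : 0 ≤ s ∧ s ≤ 1) {b : ℝ} (hb : 0 ≤ b ∧ b ≤ 1)

lemma value_eq (θ : p.Ent × p.Pw) (v : Fin p.K → Bool) (π : Policy p.O (Fin p.A)) :
    (p.mdl hs hb θ v).value π = p.E0 π (fun l => p.ψg b (p.sg1 θ l)) := by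
  have h1 : (p.mdl hs hb θ v).value π =
      ∑ τ, (p.mdl hs hb θ v).trajProb π τ * p.gd 1 (List.ofFn τ) := by
    unfold POMDP.value
    refine Finset.sum_congr rfl fun τ _ => ?_
    rw [← gd_ofFn]
    rfl
  rw [h1, law, ← EX_em0 θ]
  have h2 := EX_gd θ π p.H 1 [] p.root (fun c => 1 + b * p.X s v c) rfl
  refine h2.trans ?_
  rw [EX_em0 θ]
  refine E0_congr θ π (φ := fun c => (1 + b * p.X s v c) * p.φg c) ?_ ?_
  · simp [φg, ψg]
  · rintro ((_ | _) | (_ | _)) <;> simp [mean, φg, ψg, X]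

lemma value_le (θ : p.Ent × p.Pw) (v : Fin p.K → Bool) (π : Policy p.O (Fin p.A)) :
    (p.mdl hs hb θ v).value π ≤ 1 / 2 * (1 - p.E0 π (fun l => (Rf (p.sg1 θ l) : ℝ))) +
      b / 2 * p.E0 π (fun l => (Ff (p.sg1 θ l) : ℝ)) := by
  rw [value_eq]
  have h := E0_mono π (G := fun l => p.ψg b (p.sg1 θ l)) (G' := fun l => 1 / 2 +
      (-(1 / 2) * (Rf (p.sg1 θ l) : ℝ) + b / 2 * (Ff (p.sg1 θ l) : ℝ))) (fun l => by
    rcases p.sg1 θ l with _ | ⟨(_ | _) | (_ | _), o⟩ <;> simp [ψg, Rf, Ff]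
    ring_nf; rfl)
  rw [E0_add, E0_const, E0_add, E0_smul, E0_smul] at h
  linarith

/-! ### The optimal open-loop policy -/

/-- The action of the optimal open-loop policy at step `h`. -/
def ast (p : Par) (θ : p.Ent × p.Pw) (h : ℕ) : Fin p.A :=
  if h < p.n + θ.1.1.1 then
    ⟨θ.1.2.1.1 / 2 ^ (p.n + θ.1.1.1 - (h + 1)) % 2, by have := p.hA; omega⟩
  else if h = p.n + θ.1.1.1 then ⟨2 + θ.1.2.2.1, by have := θ.1.2.2.2; omega⟩
  else if hw : p.hmax < h ∧ h < p.H then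
    ⟨p.r + (θ.2 ⟨h - p.hmax - 1, by simp only [L]; omega⟩).1, by
      have := (θ.2 ⟨h - p.hmax - 1, by simp only [L]; omega⟩).2; omega⟩
  else ⟨p.r, by have := p.hA; simp only [r]; omega⟩

/-- The state visited at step `h` under the optimal open-loop policy. -/
def path (p : Par) (θ : p.Ent × p.Pw) (h : ℕ) : St p.N :=
  if h ≤ p.n + θ.1.1.1 then
    .tree ⟨θ.1.2.1.1 / 2 ^ (p.n + θ.1.1.1 - h), lt_of_le_of_lt (Nat.div_le_self _ _)
      (lt_of_lt_of_le θ.1.2.1.2 p.half_le_N)⟩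
  else .lock true

lemma hmax_bounds : p.n ≤ p.hmax ∧ p.hmax + 1 < p.H := by
  have := p.hH; have := p.hn; simp only [hmax]; omega

lemma path_one (θ : p.Ent × p.Pw) : p.path θ 1 = p.root := by
  have hn := p.hn
  unfold path root
  rw [if_pos (by omega)]
  congr 2
  apply Nat.div_eq_of_lt
  refine lt_of_lt_of_le θ.1.2.1.2 (Nat.pow_le_pow_right (by norm_num) (by omega))

lemma path_last (θ : p.Ent × p.Pw) : p.path θ p.H = .lock true := by
  have h1 := hmax_bounds (p := p)
  have h2 := θ.1.1.2
  unfold path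
  rw [if_neg (by omega)]

lemma path_step (θ : p.Ent × p.Pw) (h : ℕ) (h1 : h < p.H) :
    p.nx true θ h (p.path θ h) (p.ast θ h) = p.path θ (h + 1) := by
  have hm := hmax_bounds (p := p)
  have he := θ.1.1.2
  rcases lt_trichotomy h (p.n + θ.1.1.1) with hh | hh | hh
  · unfold path
    rw [if_pos hh.le, if_pos (by omega)]
    have ha : p.ast θ h = ⟨θ.1.2.1.1 / 2 ^ (p.n + θ.1.1.1 - (h + 1)) % 2, by
        have := p.hA; omega⟩ := by
      unfold ast; rw [if_pos hh]
    rw [ha]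
    have hpow : p.n + θ.1.1.1 - h = (p.n + θ.1.1.1 - (h + 1)) + 1 := by omega
    have hdiv : 2 * (θ.1.2.1.1 / 2 ^ (p.n + θ.1.1.1 - h)) +
        θ.1.2.1.1 / 2 ^ (p.n + θ.1.1.1 - (h + 1)) % 2 =
        θ.1.2.1.1 / 2 ^ (p.n + θ.1.1.1 - (h + 1)) := by
      rw [hpow, pow_succ, ← Nat.div_div_eq_div_mul]
      omega
    simp only [nx]
    rw [if_pos (Nat.mod_lt _ (by norm_num))]
    unfold child
    simp only [hdiv]
    rw [dif_pos (lt_of_le_of_lt (Nat.div_le_self _ _) (lt_of_lt_of_le θ.1.2.1.2 p.half_le_N))]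
  · unfold path
    rw [if_pos hh.le, if_neg (by omega)]
    have ha : p.ast θ h = ⟨2 + θ.1.2.2.1, by have := θ.1.2.2.2; omega⟩ := by
      unfold ast; rw [if_neg (by omega), if_pos hh]
    rw [ha]
    simp only [nx]
    rw [if_neg (by omega), if_pos]
    refine ⟨trivial, hh, ?_, rfl⟩
    simp [hh]
  · unfold path
    rw [if_neg (by omega), if_neg (by omega)]
    have key : p.r ≤ (p.ast θ h).1 ∧ p.okPw θ.2 h (p.ast θ h) := by
      unfold ast
      rw [if_neg (by omega), if_neg (by omega)]
      split_ifs with hw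
      · refine ⟨by simp, ?_⟩
        intro j hj
        have : j = ⟨h - p.hmax - 1, by simp only [L]; omega⟩ := Fin.ext (by simp; omega)
        rw [this]
      · refine ⟨le_rfl, ?_⟩
        intro j hj
        have := j.2
        simp only [L] at this
        omega
    simp only [nx]
    rw [if_neg (by omega), if_pos ⟨trivial, key.2⟩]

/-- The optimal open-loop policy. -/
def opt (p : Par) (θ : p.Ent × p.Pw) : Policy p.O (Fin p.A) where
  act hist _ a := if a = p.ast θ (hist.length + 1) then 1 else 0
  act_nonneg _ _ _ := by split_ifs <;> norm_num
  act_sum _ _ := by simp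

lemma EX_opt (θ : p.Ent × p.Pw) (b : ℝ) (k : ℕ) :
    ∀ (h : ℕ) (hist : List (p.O × Fin p.A)), k + h = p.H → hist.length + 1 = h →
      EX (fun h st o => p.em0 h st (p.eO o)) (p.nx true θ) (p.opt θ) (k + 1) h hist (p.path θ h)
        (fun l => p.ψg b (sig p.cls (p.nx true θ) h (p.path θ h) l)) = (1 + b) / 2 := by
  have hsum : ∀ h st, ∑ o, p.em0 h st (p.eO o) = 1 := fun h st => by
    rw [p.eO.sum_comp (fun x => p.em0 h st x)]; exact em0_sum _ _
  induction k with
  | zero =>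
    intro h hist hk hl
    obtain rfl : h = p.H := by omega
    have hc : p.cls p.H (.lock true) = some (.fin true) := by simp [cls]
    rw [path_last]
    simp only [EX, sig_some hc, ψg, ← Finset.sum_mul, (p.opt θ).act_sum, one_mul, hsum]
  | succ k ih =>
    intro h hist hk hl
    have hc : p.cls h (p.path θ h) = none := by
      unfold path
      split_ifs
      · rfl
      · simp [cls]; omega
    rw [EX]
    simp only [sig_none hc]
    have hin : ∀ o, ∑ a, (p.opt θ).act hist o a *
        EX (fun h st o => p.em0 h st (p.eO o)) (p.nx true θ) (p.opt θ) (k + 1) (h + 1)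
          (hist ++ [(o, a)]) (p.nx true θ h (p.path θ h) a)
          (fun l => p.ψg b (sig p.cls (p.nx true θ) (h + 1)
            (p.nx true θ h (p.path θ h) a) l)) = (1 + b) / 2 := by
      intro o
      simp only [opt, hl, ite_mul, one_mul, zero_mul, Finset.sum_ite_eq', Finset.mem_univ, if_true]
      rw [path_step θ h (by omega)]
      exact ih (h + 1) _ (by omega) (by simp; omega)
    simp only [hin, ← Finset.sum_mul, hsum, one_mul]

lemma optValue_ge (θ : p.Ent × p.Pw) (v : Fin p.K → Bool) :
    (1 + b) / 2 ≤ (p.mdl hs hb θ v).optValue := by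
  refine le_trans (le_of_eq ?_) (value_le_optValue _ (p.opt θ))
  rw [value_eq, ← EX_em0 θ]
  have hH := p.hH
  have := EX_opt θ b (p.H - 1) 1 [] (by omega) rfl
  rw [path_one, Nat.sub_add_cancel (by omega)] at this
  exact this.symm

/-- Suboptimality: revealing costs one half, missing the flagged lock costs `b / 2`. -/
lemma gap (θ : p.Ent × p.Pw) (v : Fin p.K → Bool) (π : Policy p.O (Fin p.A)) :
    1 / 2 * p.E0 π (fun l => (Rf (p.sg1 θ l) : ℝ)) +
      b / 2 * (1 - p.E0 π (fun l => (Ff (p.sg1 θ l) : ℝ))) ≤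
      (p.mdl hs hb θ v).optValue - (p.mdl hs hb θ v).value π := by
  have h1 := optValue_ge hs hb θ v
  have h2 := value_le hs hb θ v π
  linarith

end Par
end HardFam

namespace HardFam
namespace Par
variable {p : Par}

/-! ### Counting informative signals -/

lemma Rf_forget (θ : p.Ent × p.Pw) (l : List (p.O × Fin p.A)) : ∀ (h : ℕ) (st : St p.N),
    Rf (sig p.cls (p.nx true θ) h st l) = Rf (sig p.cls p.nxb h (p.forget st) l) := by
  induction l with
  | nil => intro h st; rfl
  | cons q l ih =>
    intro h st
    rcases hc : p.cls h st with _ | c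
    · have hc' : p.cls h (p.forget st) = none := by
        rcases st with i | f | f | _ <;> simp_all [cls, forget]
      rw [sig_none hc, sig_none hc', ih, forget_nx]
    · rcases st with i | f | f | _ <;> simp only [cls, reduceCtorEq] at hc
      · split_ifs at hc with hh
        obtain rfl := Option.some.inj hc
        rw [sig_some (c := .fin f) (by simp [cls, hh]),
          sig_some (c := .fin false) (by simp [cls, hh, forget])]
        rfl
      · split_ifs at hc with hh
        obtain rfl := Option.some.inj hc
        rw [sig_some (c := .rev f) (by simp [cls, hh]),
          sig_some (c := .rev false) (by simp [cls, hh, forget])]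
        rfl

/-- Indicator of a reveal, read off without knowing `θ`. -/
def rev (p : Par) (l : List (p.O × Fin p.A)) : ℕ := Rf (sig p.cls p.nxb 1 p.root l)

lemma Rf_sg1 (θ : p.Ent × p.Pw) (l : List (p.O × Fin p.A)) : Rf (p.sg1 θ l) = p.rev l :=
  Rf_forget θ l 1 p.root

lemma Rf_le (c : Option (Cls × p.O)) : Rf c ≤ 1 := by
  rcases c with _ | ⟨_ | _, o⟩ <;> simp [Rf]

lemma Nf_le_Rf (c : Option (Cls × p.O)) : Nf c ≤ Rf c := by
  rcases c with _ | ⟨(_ | _) | _, o⟩ <;> simp [Rf, Nf]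

lemma unflagged_emt (θ : p.Ent × p.Pw) (h : ℕ) (f : Bool) (l : List (p.O × Fin p.A)) :
    Ff (sig p.cls (p.nx true θ) h (.emt f) l) = 0 := by
  rcases l with _ | ⟨q, l⟩
  · rfl
  · by_cases hh : h ≤ p.H
    · rw [sig_some (c := .rev f) (by simp [cls, hh])]; rfl
    · rw [sig_none (by simp [cls, hh])]
      simp only [nx, sig_term]; rfl

/-- Once the lock was entered without the flag, no flagged signal occurs. -/
lemma unflagged (θ : p.Ent × p.Pw) (l : List (p.O × Fin p.A)) : ∀ h : ℕ,
    Nf (sig p.cls (p.nx true θ) h (.lock false) l) + Ff (sig p.cls (p.nx true θ) h (.lock false) l)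
      = 0 := by
  induction l with
  | nil => intro h; rfl
  | cons q l ih =>
    intro h
    by_cases hh : h = p.H
    · rw [sig_some (c := .fin false) (by simp [cls, hh])]; rfl
    · rw [sig_none (by simp [cls, hh])]
      simp only [nx]
      split_ifs with h1 h2
      · rw [unflagged_emt]
        rcases l with _ | ⟨q, l⟩
        · rfl
        · by_cases hh : h + 1 ≤ p.H
          · rw [sig_some (c := .rev false) (by simp [cls, hh])]; rfl
          · rw [sig_none (by simp [cls, hh])]
            simp only [nx, sig_term]; rfl
      · simp at h2
      · exact ih _

/-- Holding the flagged lock until the end determines the password. -/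
lemma pw_unique (θ θ' : p.Ent × p.Pw) (l : List (p.O × Fin p.A)) : ∀ h : ℕ,
    Ff (sig p.cls (p.nx true θ) h (.lock true) l) ≠ 0 →
    Ff (sig p.cls (p.nx true θ') h (.lock true) l) ≠ 0 →
    ∀ j : Fin p.L, h ≤ p.hmax + 1 + j.1 → θ.2 j = θ'.2 j := by
  induction l with
  | nil => intro h h1; exact absurd rfl h1
  | cons q l ih =>
    intro h h1 h2 j hj
    by_cases hh : h = p.H
    · have := j.2
      simp only [L] at this
      omega
    · rw [sig_none (by simp [cls, hh])] at h1 h2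
      simp only [nx] at h1 h2
      by_cases hr : q.2.1 < p.r
      · rw [if_pos hr, unflagged_emt] at h1
        exact absurd rfl h1
      · rw [if_neg hr] at h1 h2
        by_cases o1 : p.okPw θ.2 h q.2
        · by_cases o2 : p.okPw θ'.2 h q.2
          · rw [if_pos ⟨trivial, o1⟩] at h1
            rw [if_pos ⟨trivial, o2⟩] at h2
            by_cases e : h = p.hmax + 1 + j.1
            · have a1 := o1 j e
              have a2 := o2 j e
              exact Fin.ext (by omega)
            · exact ih (h + 1) h1 h2 j (by omega)
          · rw [if_neg (fun h => o2 h.2)] at h2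
            have := unflagged θ' l (h + 1)
            omega
        · rw [if_neg (fun h => o1 h.2)] at h1
          have := unflagged θ l (h + 1)
          omega

/-- A flagged signal determines the entry. -/
lemma ent_unique (θ θ' : p.Ent × p.Pw) (l : List (p.O × Fin p.A)) : ∀ (h : ℕ) (i : Fin p.N),
    Nf (sig p.cls (p.nx true θ) h (.tree i) l) + Ff (sig p.cls (p.nx true θ) h (.tree i) l) ≠ 0 →
    Nf (sig p.cls (p.nx true θ') h (.tree i) l) + Ff (sig p.cls (p.nx true θ') h (.tree i) l) ≠ 0 →
    θ.1 = θ'.1 ∧ (Ff (sig p.cls (p.nx true θ) h (.tree i) l) ≠ 0 →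
      Ff (sig p.cls (p.nx true θ') h (.tree i) l) ≠ 0 → θ = θ') := by
  induction l with
  | nil => intro h i h1; exact absurd rfl h1
  | cons q l ih =>
    intro h i h1 h2
    rw [sig_none (by rfl)] at h1 h2 ⊢
    rw [sig_none (by rfl)]
    simp only [nx] at h1 h2 ⊢
    by_cases hr : q.2.1 < 2
    · simp only [if_pos hr] at h1 h2 ⊢
      exact ih _ _ h1 h2
    · simp only [if_neg hr] at h1 h2 ⊢
      by_cases o1 : p.isEnt θ.1 h i q.2
      · by_cases o2 : p.isEnt θ'.1 h i q.2
        · simp only [o1, o2, and_self, if_true] at h1 h2 ⊢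
          obtain ⟨a1, a2, a3⟩ := o1
          obtain ⟨b1, b2, b3⟩ := o2
          have he : θ.1 = θ'.1 := by
            refine Prod.ext (Fin.ext (by omega)) (Prod.ext (Fin.ext (by omega)) (Fin.ext (by omega)))
          refine ⟨he, fun f1 f2 => Prod.ext he (funext fun j => ?_)⟩
          have := θ.1.1.2
          have := hmax_bounds (p := p)
          exact pw_unique θ θ' l (h + 1) f1 f2 j (by omega)
        · simp only [o2, and_false, if_false] at h2
          exact absurd (unflagged θ' l (h + 1)) h2
      · simp only [o1, and_false, if_false] at h1
        exact absurd (unflagged θ l (h + 1)) h1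

lemma sum_le_one {ι : Type*} [Fintype ι] (f : ι → ℕ) (h1 : ∀ i, f i ≤ 1)
    (h : ∀ i j, f i ≠ 0 → f j ≠ 0 → i = j) : ∑ i, f i ≤ 1 := by
  by_cases hz : ∃ i, f i ≠ 0
  · obtain ⟨i, hi⟩ := hz
    rw [Finset.sum_eq_single i]
    · exact h1 i
    · intro j _ hj
      by_contra hne
      exact hj (h j i hne hi)
    · simp
  · push Not at hz
    simp [hz]

lemma sum_Nf_le (w : p.Pw) (l : List (p.O × Fin p.A)) : ∑ e, Nf (p.sg1 (e, w) l) ≤ p.rev l := by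
  by_cases hr : p.rev l = 0
  · rw [hr, Nat.le_zero]
    refine Finset.sum_eq_zero fun e _ => ?_
    have := Nf_le_Rf (p.sg1 (e, w) l)
    rw [Rf_sg1] at this
    omega
  · refine le_trans (sum_le_one _ (fun e => (Nf_le_Rf _).trans (Rf_le _)) ?_)
      (Nat.one_le_iff_ne_zero.mpr hr)
    intro e e' h1 h2
    exact (ent_unique (e, w) (e', w) l 1 ⟨0, p.N_pos⟩ (by unfold sg1 root at h1; omega)
      (by unfold sg1 root at h2; omega)).1

lemma sum_Ff_le (l : List (p.O × Fin p.A)) : ∑ θ, Ff (p.sg1 θ l) ≤ 1 := by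
  refine sum_le_one _ (fun θ => ?_) ?_
  · have := Nf_add_Ff (p.sg1 θ l)
    omega
  · intro θ θ' h1 h2
    exact (ent_unique θ θ' l 1 ⟨0, p.N_pos⟩ (by unfold sg1 root at h1; omega)
      (by unfold sg1 root at h2; omega)).2 h1 h2

lemma E0_sum {ι : Type*} (I : Finset ι) (π : Policy p.O (Fin p.A))
    (G : ι → List (p.O × Fin p.A) → ℝ) :
    p.E0 π (fun l => ∑ i ∈ I, G i l) = ∑ i ∈ I, p.E0 π (G i) := by
  classical
  induction I using Finset.induction_on with
  | empty => simp [E0_const]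
  | insert i I hi ih => simp only [Finset.sum_insert hi, E0_add, ih]

lemma E0_Ff_sum (π : Policy p.O (Fin p.A)) :
    ∑ θ, p.E0 π (fun l => (Ff (p.sg1 θ l) : ℝ)) ≤ 1 := by
  rw [← E0_sum]
  refine le_trans (E0_mono π (G' := fun _ => 1) fun l => ?_) (le_of_eq (E0_const _ _))
  exact_mod_cast sum_Ff_le l

lemma E0_Ff_nonneg (π : Policy p.O (Fin p.A)) (θ : p.Ent × p.Pw) :
    0 ≤ p.E0 π (fun l => (Ff (p.sg1 θ l) : ℝ)) := by
  have := E0_mono π (G := fun _ => 0) (G' := fun l => (Ff (p.sg1 θ l) : ℝ)) fun l => by positivity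
  rwa [E0_const] at this

/-! ### The reference model -/

variable {s : ℝ} (hs : 0 ≤ s ∧ s ≤ 1) {b : ℝ} (hb : 0 ≤ b ∧ b ≤ 1)

/-- The entry-password pair used for the reference model, in which it has no influence. -/
def θ0 (p : Par) : p.Ent × p.Pw :=
  ((⟨0, by omega⟩, ⟨0, by positivity⟩, ⟨0, by have := p.hA; omega⟩),
    fun _ => ⟨0, by have := p.hA; simp only [r]; omega⟩)

/-- The reference model, in which the secret entry never works. -/
def mdl0 (p : Par) {s : ℝ} (hs : 0 ≤ s ∧ s ≤ 1) : POMDP p.S p.O (Fin p.A) p.H :=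
  p.mdl hs (b := 0) ⟨le_rfl, zero_le_one⟩ p.θ0 (fun _ => true)

lemma mdl0_law (π : Policy p.O (Fin p.A)) (G : List (p.O × Fin p.A) → ℝ) :
    ∑ τ, (p.mdl0 hs).trajProb π τ * G (List.ofFn τ) = p.E0 π G := by
  unfold mdl0
  rw [law]
  simp

lemma trajProb_ratio (θ : p.Ent × p.Pw) (v : Fin p.K → Bool) (π : Policy p.O (Fin p.A))
    (τ : Fin p.H → p.O × Fin p.A) :
    (p.mdl hs hb θ v).trajProb π τ =
      (p.mdl0 hs).trajProb π τ * (1 + b * p.X s v (p.sg1 θ (List.ofFn τ))) := by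
  refine trajProb_of_expect (r := fun l => 1 + b * p.X s v (p.sg1 θ l)) (fun G => ?_) τ
  rw [law, mdl0_law hs π (fun l => (1 + b * p.X s v (p.sg1 θ l)) * G l)]

end Par
end HardFam

namespace HardFam

/-! ### The revealing condition -/

section Marginals

variable {S O A : Type} [Fintype S] [Fintype O] [Fintype A] {H : ℕ} (M : POMDP S O A H)

lemma emitActProb_sum (m : ℕ) : ∀ (h : ℕ) (s : S) (a : Fin (m - 1) → A),
    ∑ ω, M.emitActProb m h s ω a = 1 := by
  induction m with
  | zero => intro h s a; simp [POMDP.emitActProb]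
  | succ m ih =>
    intro h s a
    rcases m with _ | m
    · rw [sum_fin_succ]
      simp [POMDP.emitActProb, M.emit_sum]
    · rw [sum_fin_succ]
      simp only [POMDP.emitActProb, Fin.cons_zero, Fin.cons_succ, ← Finset.mul_sum]
      have : ∀ o : O, ∑ ω : Fin (m + 1) → O, ∑ s' : S, M.trans h s (a ⟨0, Nat.succ_pos m⟩) s' *
          M.emitActProb (m + 1) (h + 1) s' ω (fun i => a i.succ) = 1 := by
        intro o
        rw [Finset.sum_comm]
        simp only [← Finset.mul_sum]
        calc _ = ∑ s' : S, M.trans h s (a ⟨0, Nat.succ_pos m⟩) s' * 1 :=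
              Finset.sum_congr rfl fun s' _ => by rw [ih (h + 1) s' (fun i => a i.succ)]
          _ = 1 := by simp [M.trans_sum]
      calc _ = ∑ o, M.emit h s o * 1 := Finset.sum_congr rfl fun o _ => by rw [← this o]
        _ = 1 := by simp [M.emit_sum]

lemma emitActProb_marg_one (m h : ℕ) (s : S) (a : Fin (m + 1 - 1) → A) (g : O → ℝ) :
    ∑ ω, g (ω 0) * M.emitActProb (m + 1) h s ω a = ∑ o, g o * M.emit h s o := by
  rw [sum_fin_succ]
  refine Finset.sum_congr rfl fun o _ => ?_
  simp only [Fin.cons_zero, ← Finset.mul_sum]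
  congr 1
  rcases m with _ | m
  · simp [POMDP.emitActProb]
  · simp only [POMDP.emitActProb, Fin.cons_zero, Fin.cons_succ, ← Finset.mul_sum]
    rw [Finset.sum_comm]
    simp only [← Finset.mul_sum]
    calc _ = M.emit h s o * ∑ s', M.trans h s (a ⟨0, Nat.succ_pos m⟩) s' * 1 := by
          congr 1
          refine Finset.sum_congr rfl fun s' _ => ?_
          rw [← emitActProb_sum M (m + 1) (h + 1) s' (fun i => a i.succ)]
      _ = M.emit h s o := by simp [M.trans_sum]

/-- Only the first two observations matter for functions of the first two observations. -/
lemma emitActProb_marg_two (m h : ℕ) (s : S) (a : Fin (m + 2 - 1) → A) (g : O → O → ℝ) :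
    ∑ ω, g (ω 0) (ω 1) * M.emitActProb (m + 2) h s ω a =
      ∑ o, M.emit h s o * ∑ s', M.trans h s (a ⟨0, Nat.succ_pos m⟩) s' *
        ∑ o', g o o' * M.emit (h + 1) s' o' := by
  rw [sum_fin_succ]
  refine Finset.sum_congr rfl fun o _ => ?_
  simp only [POMDP.emitActProb, Fin.cons_zero, Fin.cons_succ, Finset.mul_sum]
  rw [Finset.sum_comm]
  refine Finset.sum_congr rfl fun s' _ => ?_
  have := emitActProb_marg_one M m (h + 1) s' (fun i => a i.succ) (fun o' => g o o')
  simp only [← Finset.mul_sum]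
  rw [← this, Finset.mul_sum, Finset.mul_sum]
  refine Finset.sum_congr rfl fun ω _ => ?_
  have e : (Fin.cons o ω : Fin (m + 2) → O) 1 = ω 0 := rfl
  rw [e]
  ring

end Marginals

namespace Par
variable {p : Par}

/-- Unbiased weight of the flag given a sign observation. -/
def wt (s : ℝ) (v : Fin p.K → Bool) (k : Fin p.K) (g : Bool) : Bool → ℝ
  | true => sg (v k) * sg g / s
  | false => 1 - sg (v k) * sg g / s

/-- Unbiased estimate of the indicator of a state from two consecutive observations. -/
def est (s : ℝ) (v : Fin p.K → Bool) (st : St p.N) : Ob p.N p.K → Ob p.N p.K → ℝ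
  | .tree i, _ => if st = .tree i then 1 else 0
  | .term, _ => if st = .term then 1 else 0
  | .sgn k g, _ => match st with
    | .emt f => wt s v k g f
    | _ => 0
  | .lock, .sgn k g => match st with
    | .lock f => wt s v k g f
    | _ => 0
  | _, _ => 0

lemma wt_abs {s : ℝ} (hs : 0 < s) (v : Fin p.K → Bool) (k : Fin p.K) (g : Bool) :
    |wt s v k g true| + |wt s v k g false| ≤ 2 / s + 1 := by
  have h1 : |sg (v k) * sg g / s| = 1 / s := by
    rw [abs_div, abs_mul, abs_sg, abs_sg, abs_of_pos hs]; norm_num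
  have h2 : |1 - sg (v k) * sg g / s| ≤ 1 + 1 / s := by
    refine (abs_sub _ _).trans ?_
    rw [h1]; simp
  simp only [wt]
  rw [h1]
  have : 2 / s = 1 / s + 1 / s := by ring
  linarith

lemma est_abs {s : ℝ} (hs : 0 < s) (v : Fin p.K → Bool) (x y : Ob p.N p.K) :
    ∑ st, |est s v st x y| ≤ 2 / s + 1 := by
  have h0 : 0 < 2 / s := by positivity
  rcases x with i | _ | _ | _ | _ | ⟨k, g⟩
  · simp only [est]
    rw [sum_St]
    simp [apply_ite abs]
    linarith
  · rcases y with i | _ | _ | _ | _ | ⟨k, g⟩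
    case sgn =>
      rw [sum_St]
      simp only [est]
      simpa using wt_abs hs v k g
    all_goals
      simp [est]
      linarith
  · simp [est]; linarith
  · simp [est]; linarith
  · simp only [est]
    rw [sum_St]
    simp
    linarith
  · rw [sum_St]
    simp only [est]
    simpa using wt_abs hs v k g

lemma wt_mean {s : ℝ} (hs : 0 < s) (v : Fin p.K → Bool) (h : ℕ) (hh : h ≤ p.H) (f f' : Bool) :
    ∑ k, (wt s v k true f' * p.em s v h (.emt f) (.sgn k true) +
      wt s v k false f' * p.em s v h (.emt f) (.sgn k false)) = if f' = f then 1 else 0 := by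
  have hK := K_pos (p := p)
  have key : ∀ k, wt s v k true f' * p.em s v h (.emt f) (.sgn k true) +
      wt s v k false f' * p.em s v h (.emt f) (.sgn k false) =
      (if f' = f then 1 else 0) / p.K := by
    intro k
    rcases hv : v k <;> rcases f <;> rcases f' <;>
      simp [wt, em, hh, hv, sg] <;> field_simp <;> ring
  simp only [key]
  simp
  split_ifs <;> simp <;> field_simp

variable {s : ℝ} (hs : 0 ≤ s ∧ s ≤ 1) {b : ℝ} (hb : 0 ≤ b ∧ b ≤ 1)

lemma sum_trans (θ : p.Ent × p.Pw) (v : Fin p.K → Bool) (h : ℕ) (x : p.S) (a : Fin p.A)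
    (f : St p.N → ℝ) : ∑ y, (p.mdl hs hb θ v).trans h x a y * f (p.eS y) =
      (1 - b) * f (p.nx false θ h (p.eS x) a) + b * f (p.nx true θ h (p.eS x) a) := by
  have : ∀ y, (p.mdl hs hb θ v).trans h x a y =
      (1 - b) * (if p.eS y = p.nx false θ h (p.eS x) a then 1 else 0) +
      b * (if p.eS y = p.nx true θ h (p.eS x) a then 1 else 0) := fun y => rfl
  simp only [this]
  rw [p.eS.sum_comp (fun y => ((1 - b) * (if y = p.nx false θ h (p.eS x) a then 1 else 0) +
      b * (if y = p.nx true θ h (p.eS x) a then 1 else 0)) * f y)]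
  simp [add_mul, Finset.sum_add_distrib]

/-- Unbiasedness of the estimate after a revealing action. -/
lemma est_unbiased (hs0 : 0 < s) (θ : p.Ent × p.Pw) (v : Fin p.K → Bool) (h : ℕ) (hh : h < p.H)
    (st : St p.N) (x : p.S) (a : Fin p.A) (ha : a.1 < p.r) :
    ∑ o, (p.mdl hs hb θ v).emit h x o * ∑ y, (p.mdl hs hb θ v).trans h x a y *
        ∑ o', est s v st (p.eO o) (p.eO o') * (p.mdl hs hb θ v).emit (h + 1) y o' =
      if st = p.eS x then 1 else 0 := by
  have hem : ∀ h x o, (p.mdl hs hb θ v).emit h x o = p.em s v h (p.eS x) (p.eO o) :=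
    fun _ _ _ => rfl
  simp only [hem]
  have h1 : ∀ o y, ∑ o', est s v st (p.eO o) (p.eO o') * p.em s v (h + 1) (p.eS y) (p.eO o') =
      ∑ x', est s v st (p.eO o) x' * p.em s v (h + 1) (p.eS y) x' := fun o y =>
    p.eO.sum_comp (fun x' => est s v st (p.eO o) x' * p.em s v (h + 1) (p.eS y) x')
  simp only [h1]
  have h2 : ∀ o, ∑ y, (p.mdl hs hb θ v).trans h x a y *
      ∑ x', est s v st (p.eO o) x' * p.em s v (h + 1) (p.eS y) x' = _ := fun o =>
    sum_trans hs hb θ v h x a (fun z => ∑ x', est s v st (p.eO o) x' * p.em s v (h + 1) z x')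
  simp only [h2]
  rw [p.eO.sum_comp (fun u => p.em s v h (p.eS x) u *
    ((1 - b) * ∑ x', est s v st u x' * p.em s v (h + 1) (p.nx false θ h (p.eS x) a) x' +
      b * ∑ x', est s v st u x' * p.em s v (h + 1) (p.nx true θ h (p.eS x) a) x')), sum_Ob]
  generalize p.eS x = z
  have hz : ∀ c : ℝ, (1 - b) * c + b * c = c := fun c => by ring
  rcases z with i | f | f | _
  · have e : ∀ x, p.em s v h (.tree i) x = if x = .tree i then 1 else 0 := fun _ => rfl
    have e' : ∀ i z, ∑ x', est s v st (.tree i) x' * p.em s v (h + 1) z x' =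
        if st = .tree i then 1 else 0 := fun i z => by
      simp only [est, ← Finset.mul_sum, em_sum, mul_one]
    simp only [e, e', hz]
    simp only [Ob.tree.injEq, reduceCtorEq, if_false, zero_mul, ite_mul, one_mul,
      Finset.sum_ite_eq', Finset.mem_univ, if_true, Finset.sum_const_zero, add_zero]
  · have hne : h ≠ p.H := by omega
    have hw := wt_mean hs0 v (h + 1) (by omega) f
    simp only [nx, if_pos ha]
    have hl : ∑ x', est s v st .lock x' * p.em s v (h + 1) (.emt f) x' =
        if st = .lock f then 1 else 0 := by
      rw [sum_Ob]
      rcases st with i | f' | f' | _ <;> simp only [est] <;> simp [hw]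
    have e : ∀ x, p.em s v h (.lock f) x = if x = .lock then 1 else 0 := fun _ => by
      simp only [em, if_neg hne]
    simp only [e, hl, hz]
    simp
  · have hw := wt_mean hs0 v h (by omega) f
    have hr : ∀ k g z, ∑ x', est s v st (.sgn k g) x' * p.em s v (h + 1) z x' =
        est s v st (.sgn k g) .term := by
      intro k g z
      simp only [est, ← Finset.mul_sum, em_sum, mul_one]
    simp only [hr]
    simp only [hz]
    have e1 : ∀ i, p.em s v h (.emt f) (.tree i) = 0 := fun i => rfl
    have e2 : p.em s v h (.emt f) .lock = 0 := rfl
    have e3 : p.em s v h (.emt f) .good = 0 := rfl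
    have e4 : p.em s v h (.emt f) .bad = 0 := rfl
    have e5 : p.em s v h (.emt f) .term = 0 := rfl
    simp only [e1, e2, e3, e4, e5, zero_mul, Finset.sum_const_zero, zero_add]
    rcases st with i | f' | f' | _
    · simp [est]
    · simp [est]
    · have := hw f'
      simp only [St.emt.injEq, est]
      rw [← this]
      refine Finset.sum_congr rfl fun k _ => by ring
    · simp [est]
  · have e : ∀ x, p.em s v h .term x = if x = .term then 1 else 0 := fun _ => rfl
    have e' : ∀ z, ∑ x', est s v st .term x' * p.em s v (h + 1) z x' =
        if st = .term then 1 else 0 := fun z => by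
      simp only [est, ← Finset.mul_sum, em_sum, mul_one]
    simp only [e, e', hz]
    simp

/-- Number of action sequences of length `k + 1` that start with a revealing action. -/
def nrev (p : Par) (k : ℕ) : ℝ := ∑ a : Fin (k + 1) → Fin p.A, if (a 0).1 < p.r then 1 else 0

lemma nrev_eq (k : ℕ) : p.nrev k = p.r * (p.A : ℝ) ^ k := by
  unfold nrev
  rw [sum_fin_succ]
  simp only [Fin.cons_zero, Finset.sum_const, Finset.card_univ, Fintype.card_pi, Fintype.card_fin,
    Finset.prod_const, nsmul_eq_mul]
  rw [← Finset.mul_sum, Finset.sum_boole]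
  have : (Finset.univ.filter fun x : Fin p.A => x.1 < p.r).card = p.r := by
    rw [Fin.card_filter_val_lt]
    simp only [r]; omega
  rw [this]
  push_cast
  ring

lemma one_le_nrev (k : ℕ) : 1 ≤ p.nrev k := by
  rw [nrev_eq]
  have h1 : (1 : ℝ) ≤ p.r := by
    have := p.hA
    exact_mod_cast (by simp only [r]; omega : 1 ≤ p.r)
  have h2 : (1 : ℝ) ≤ (p.A : ℝ) ^ k := one_le_pow₀ (by
    have := p.hA
    exact_mod_cast (by omega : 1 ≤ p.A))
  nlinarith

/-- The left inverse: average the two-observation estimate over revealing action sequences. -/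
def linv (p : Par) (s : ℝ) (v : Fin p.K → Bool) (k : ℕ) :
    Matrix p.S ((Fin (k + 2) → p.O) × (Fin (k + 2 - 1) → Fin p.A)) ℝ :=
  Matrix.of fun x q => (if (q.2 ⟨0, Nat.succ_pos k⟩).1 < p.r then 1 else 0) / p.nrev k *
    est s v (p.eS x) (p.eO (q.1 0)) (p.eO (q.1 1))

lemma linv_mul (hs0 : 0 < s) (θ : p.Ent × p.Pw) (v : Fin p.K → Bool) (h k : ℕ) (hh : h < p.H) :
    p.linv s v k * (p.mdl hs hb θ v).emitActMatrix h (k + 2) = 1 := by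
  ext x y
  rw [Matrix.mul_apply, Fintype.sum_prod_type_right, Matrix.one_apply]
  have key : ∀ a : Fin (k + 2 - 1) → Fin p.A, ∑ ω, p.linv s v k x (ω, a) *
      (p.mdl hs hb θ v).emitActMatrix h (k + 2) (ω, a) y =
      (if (a ⟨0, Nat.succ_pos k⟩).1 < p.r then 1 else 0) / p.nrev k *
        (if x = y then 1 else 0) := by
    intro a
    have e : ∀ ω, p.linv s v k x (ω, a) * (p.mdl hs hb θ v).emitActMatrix h (k + 2) (ω, a) y =
        (if (a ⟨0, Nat.succ_pos k⟩).1 < p.r then 1 else 0) / p.nrev k *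
          (est s v (p.eS x) (p.eO (ω 0)) (p.eO (ω 1)) *
            (p.mdl hs hb θ v).emitActProb (k + 2) h y ω a) := fun ω => mul_assoc _ _ _
    simp only [e]
    rw [← Finset.mul_sum, emitActProb_marg_two (p.mdl hs hb θ v) k h y a
      (fun o o' => est s v (p.eS x) (p.eO o) (p.eO o'))]
    by_cases ha : (a ⟨0, Nat.succ_pos k⟩).1 < p.r
    · rw [est_unbiased hs hb hs0 θ v h hh _ _ _ ha]
      simp
    · simp only [if_neg ha, zero_div, zero_mul]
  simp only [key]
  rw [← Finset.sum_mul, ← Finset.sum_div]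
  have : ∑ a : Fin (k + 2 - 1) → Fin p.A, (if (a ⟨0, Nat.succ_pos k⟩).1 < p.r then (1 : ℝ) else 0) =
      p.nrev k := rfl
  rw [this, div_self (by have := one_le_nrev (p := p) k; linarith), one_mul]

lemma linv_norm (hs0 : 0 < s) (v : Fin p.K → Bool) (k : ℕ) :
    opNormStarOne (p.linv s v k) ≤ (2 / s + 1) / √(p.nrev k) := by
  have hn := one_le_nrev (p := p) k
  have h0 : 0 < 2 / s := by positivity
  unfold opNormStarOne
  refine csSup_le ⟨0, 0, by simp [starNorm], by simp⟩ ?_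
  rintro _ ⟨x, hx, rfl⟩
  set c : (Fin (k + 2 - 1) → Fin p.A) → ℝ := fun a =>
    if (a ⟨0, Nat.succ_pos k⟩).1 < p.r then 1 else 0 with hc
  have hc0 : ∀ a, 0 ≤ c a := fun a => by simp only [hc]; split_ifs <;> norm_num
  have hcc : ∑ a, c a ^ 2 = p.nrev k := by
    have : ∀ a, c a ^ 2 = c a := fun a => by simp only [hc]; split_ifs <;> norm_num
    simp only [this]
    rfl
  have hcs : ∑ a, c a * ∑ ω, |x (ω, a)| ≤ √(p.nrev k) := by
    have h1 := Finset.sum_mul_sq_le_sq_mul_sq Finset.univ c (fun a => ∑ ω, |x (ω, a)|)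
    rw [hcc] at h1
    have h2 : ∑ a, (∑ ω, |x (ω, a)|) ^ 2 ≤ 1 := by
      unfold starNorm at hx
      rwa [Real.sqrt_le_one] at hx
    refine Real.le_sqrt_of_sq_le (h1.trans ?_)
    nlinarith
  calc ∑ st, |(p.linv s v k).mulVec x st|
      ≤ ∑ st, ∑ q, |p.linv s v k st q * x q| := by
        refine Finset.sum_le_sum fun st _ => ?_
        exact Finset.abs_sum_le_sum_abs _ _
    _ = ∑ q, (∑ st, |p.linv s v k st q|) * |x q| := by
        rw [Finset.sum_comm]
        simp only [abs_mul, Finset.sum_mul]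
    _ ≤ ∑ q, (c q.2 / p.nrev k * (2 / s + 1)) * |x q| := by
        refine Finset.sum_le_sum fun q _ => mul_le_mul_of_nonneg_right ?_ (abs_nonneg _)
        have hcn : 0 ≤ c q.2 / p.nrev k := div_nonneg (hc0 _) (by linarith)
        have : ∀ st, |p.linv s v k st q| =
            c q.2 / p.nrev k * |est s v (p.eS st) (p.eO (q.1 0)) (p.eO (q.1 1))| := by
          intro st
          calc |p.linv s v k st q| = |c q.2 / p.nrev k *
                est s v (p.eS st) (p.eO (q.1 0)) (p.eO (q.1 1))| := rfl
            _ = _ := by rw [abs_mul, abs_of_nonneg hcn]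
        simp only [this, ← Finset.mul_sum]
        refine mul_le_mul_of_nonneg_left ?_ hcn
        rw [p.eS.sum_comp (fun st => |est s v st (p.eO (q.1 0)) (p.eO (q.1 1))|)]
        exact est_abs hs0 v _ _
    _ = (2 / s + 1) / p.nrev k * ∑ a, c a * ∑ ω, |x (ω, a)| := by
        rw [Fintype.sum_prod_type_right, Finset.mul_sum]
        refine Finset.sum_congr rfl fun a _ => ?_
        rw [Finset.mul_sum, Finset.mul_sum]
        refine Finset.sum_congr rfl fun ω _ => ?_
        ring
    _ ≤ (2 / s + 1) / p.nrev k * √(p.nrev k) := by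
        refine mul_le_mul_of_nonneg_left hcs (by positivity)
    _ = (2 / s + 1) / √(p.nrev k) := by
        have h3 : √(p.nrev k) ≠ 0 := by positivity
        have h4 : p.nrev k = √(p.nrev k) * √(p.nrev k) := (Real.mul_self_sqrt (by linarith)).symm
        rw [div_mul_eq_mul_div, div_eq_div_iff (by positivity) h3, mul_assoc, ← h4]

/-- Signal strength for revealing level `σ`, with `k + 2` steps of look-ahead. -/
def str (p : Par) (σ : ℝ) (k : ℕ) : ℝ := σ / √(p.nrev k)

lemma str_pos {σ : ℝ} (hσ : 0 < σ) (k : ℕ) : 0 < p.str σ k := by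
  have := one_le_nrev (p := p) k
  unfold str
  positivity

lemma str_le_one {σ : ℝ} (hσ1 : σ ≤ 1) (k : ℕ) : p.str σ k ≤ 1 := by
  have := one_le_nrev (p := p) k
  have h1 : 1 ≤ √(p.nrev k) := by rwa [Real.one_le_sqrt]
  unfold str
  rw [div_le_one (by positivity)]
  linarith

/-- The averaged estimate `linv` is the required left inverse, with norm at most `1 + 2 / σ`. -/
lemma mdl_revealing {σ : ℝ} (hσ : 0 < σ) (k : ℕ) (hk : k + 2 ≤ p.H)
    (hs : 0 ≤ p.str σ k ∧ p.str σ k ≤ 1) (θ : p.Ent × p.Pw) (v : Fin p.K → Bool) :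
    (p.mdl hs hb θ v).IsRevealing (k + 2) (σ / (σ + 2)) := by
  intro h hh
  rw [Finset.mem_Icc] at hh
  refine ⟨p.linv (p.str σ k) v k, ?_, ?_⟩
  · intro c _
    rw [linv_mul hs hb (str_pos hσ k) θ v h k (by omega), Matrix.one_mulVec]
  · refine (linv_norm (str_pos hσ k) v k).trans ?_
    have hn := one_le_nrev (p := p) k
    have h1 : 1 ≤ √(p.nrev k) := by rwa [Real.one_le_sqrt]
    unfold str
    have e : (2 / (σ / √(p.nrev k)) + 1) / √(p.nrev k) = 2 / σ + 1 / √(p.nrev k) := by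
      field_simp
    have e2 : 1 / (σ / (σ + 2)) = 2 / σ + 1 := by field_simp; ring
    rw [e, e2]
    have : 1 / √(p.nrev k) ≤ 1 := by rw [div_le_one (by positivity)]; exact h1
    linarith

end Par
end HardFam

namespace HardFam

/-! ### Algorithms as episode processes -/

section Episodes

variable {τ : Type}

/-- Running sum of `g` over the strict pasts of the episodes in `l` (most recent first). -/
def acc (g : List τ → ℝ) : List τ → ℝ
  | [] => 0
  | _ :: l => g l + acc g l

lemma acc_add_smul (c d : ℝ) (g g' : List τ → ℝ) (l : List τ) :
    acc (fun l => c * g l + d * g' l) l = c * acc g l + d * acc g' l := by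
  induction l with
  | nil => simp [acc]
  | cons x l ih => simp only [acc, ih]; ring

lemma acc_one (l : List τ) : acc (fun _ => 1) l = l.length := by
  induction l with
  | nil => simp [acc]
  | cons x l ih => simp only [acc, ih, List.length_cons]; push_cast; ring

lemma acc_mono {g g' : List τ → ℝ} (h : ∀ l, g l ≤ g' l) (l : List τ) : acc g l ≤ acc g' l := by
  induction l with
  | nil => simp [acc]
  | cons x l ih => simp only [acc]; exact add_le_add (h l) ih

lemma acc_sum {ι : Type} (I : Finset ι) (g : ι → List τ → ℝ) (l : List τ) :
    acc (fun l => ∑ i ∈ I, g i l) l = ∑ i ∈ I, acc (g i) l := by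
  induction l with
  | nil => simp [acc]
  | cons x l ih => simp only [acc, ih, Finset.sum_add_distrib]

lemma acc_reverse (G : List τ → ℝ) (l : List τ) :
    acc (fun l => G l.reverse) l.reverse = ∑ t ∈ Finset.range l.length, G (l.take t) := by
  induction l using List.reverseRecOn with
  | nil => simp [acc]
  | append_singleton l x ih =>
    rw [List.reverse_append, List.reverse_singleton, List.singleton_append, acc, ih,
      List.length_append, List.length_singleton, Finset.sum_range_succ, List.reverse_reverse,
      add_comm]
    congr 1
    · refine Finset.sum_congr rfl fun t ht => ?_
      rw [List.take_append_of_le_length (Finset.mem_range.mp ht).le]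
    · simp

variable [Fintype τ] {q : List τ → τ → ℝ}

lemma expect_acc_succ (hs : ∀ l, ∑ x, q l x = 1) (g : List τ → ℝ) (T : ℕ) :
    expect q (T + 1) (acc g) = expect q T g + expect q T (acc g) := by
  simp only [expect, acc, ← Finset.sum_mul, hs, one_mul, expect_add]

lemma expect_acc_mono_T (hq : ∀ l x, 0 ≤ q l x) (hs : ∀ l, ∑ x, q l x = 1) {g : List τ → ℝ}
    (hg : ∀ l, 0 ≤ g l) {T T' : ℕ} (h : T ≤ T') : expect q T (acc g) ≤ expect q T' (acc g) := by
  induction h with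
  | refl => rfl
  | @step k h ih =>
    refine ih.trans ?_
    rw [expect_acc_succ hs]
    have := expect_mono hq k (fun _ => 0) g hg
    rw [expect_const hs] at this
    linarith

lemma expect_congr_len (T : ℕ) : ∀ f g : List τ → ℝ, (∀ l, l.length = T → f l = g l) →
    expect q T f = expect q T g := by
  induction T with
  | zero => intro f g h; exact h [] rfl
  | succ T ih =>
    intro f g h
    refine ih _ _ fun l hl => Finset.sum_congr rfl fun x _ => ?_
    rw [h (x :: l) (by simp [hl])]

lemma expect_cnt (hs : ∀ l, ∑ x, q l x = 1) (R : τ → ℕ) (T : ℕ) :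
    expect q T (fun l => (cnt R l : ℝ)) = expect q T (acc fun l => ∑ x, q l x * R x) := by
  induction T with
  | zero => simp [expect, cnt, acc]
  | succ T ih =>
    rw [expect_acc_succ hs, ← ih, ← expect_add]
    simp only [expect]
    congr 1
    funext l
    simp only [cnt, List.map_cons, List.sum_cons, Nat.cast_add, mul_add, Finset.sum_add_distrib,
      ← Finset.sum_mul, hs, one_mul]

end Episodes

section Law

variable {S O A : Type} [Fintype S] [Fintype O] [Fintype A] {H : ℕ}

/-- Law of the next episode given the past episodes (most recent first). -/
def eplaw (M : POMDP S O A H) (𝔄 : Algorithm O A H) (l : List (Fin H → O × A))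
    (x : Fin H → O × A) : ℝ := M.trajProb (𝔄.policyAt l.reverse) x

lemma eplaw_nonneg (M : POMDP S O A H) (𝔄 : Algorithm O A H) (l : List (Fin H → O × A))
    (x : Fin H → O × A) : 0 ≤ eplaw M 𝔄 l x := trajProb_nonneg _ _ _

lemma eplaw_sum (M : POMDP S O A H) (𝔄 : Algorithm O A H) (l : List (Fin H → O × A)) :
    ∑ x, eplaw M 𝔄 l x = 1 := trajProb_sum _ _

lemma transcript_expect (M : POMDP S O A H) (𝔄 : Algorithm O A H) (T : ℕ)
    (f : List (Fin H → O × A) → ℝ) :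
    ∑ τs : Fin T → Fin H → O × A, M.transcriptProb 𝔄 τs * f (List.ofFn τs).reverse =
      expect (eplaw M 𝔄) T f :=
  sum_prod_eq_expect (fun l x => M.trajProb (𝔄.policyAt l) x) T f

lemma expRegret_eq (M : POMDP S O A H) (𝔄 : Algorithm O A H) (T : ℕ) :
    M.expRegret 𝔄 T = expect (eplaw M 𝔄) T
      (acc fun l => M.optValue - M.value (𝔄.policyAt l.reverse)) := by
  rw [← transcript_expect]
  unfold POMDP.expRegret
  refine Finset.sum_congr rfl fun τs _ => ?_
  rw [acc_reverse (fun l => M.optValue - M.value (𝔄.policyAt l)), List.length_ofFn,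
    Fin.sum_univ_eq_sum_range (fun t => M.optValue - M.value (𝔄.policyAt ((List.ofFn τs).take t)))]

open Classical in
lemma pacProb_eq (M : POMDP S O A H) (𝔄 : Algorithm O A H) (T : ℕ) (δ : ℝ) :
    M.pacProb 𝔄 T δ = expect (eplaw M 𝔄) T
      (fun l => if M.optValue - M.value (𝔄.out l.reverse) < δ then 1 else 0) := by
  rw [← transcript_expect]
  unfold POMDP.pacProb
  refine Finset.sum_congr rfl fun τs _ => ?_
  rw [List.reverse_reverse]
  split_ifs <;> simp

lemma expRegret_mono (M : POMDP S O A H) (𝔄 : Algorithm O A H) {T T' : ℕ} (h : T ≤ T') :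
    M.expRegret 𝔄 T ≤ M.expRegret 𝔄 T' := by
  rw [expRegret_eq, expRegret_eq]
  exact expect_acc_mono_T (eplaw_nonneg M 𝔄) (eplaw_sum M 𝔄)
    (fun l => by linarith [value_le_optValue M (𝔄.policyAt l.reverse)]) h

end Law

namespace Par
variable {p : Par} {s : ℝ} (hs : 0 ≤ s ∧ s ≤ 1) {ε : ℝ} (hb : 0 ≤ ε ∧ ε ≤ 1)

/-! ### Indistinguishability of the family -/

/-- If reveals and episodes stay within budget, then for any family of test functions `Y θ` of the
transcript, of which few can be small simultaneously, some `Y θ` has non-negligible expectation in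
some model with parameter `θ`. -/
lemma family_core (hε1 : ε ≤ 0.1) {N1 N2 : ℕ} (hN1 : N1 * (ε ^ 2 * s ^ 2) ≤ √p.K / 10)
    (hN2 : N2 * ε ^ 2 ≤ 1 / 50) (𝔄 : Algorithm p.O (Fin p.A) p.H) (T : ℕ)
    (hR : expect (eplaw (p.mdl0 hs) 𝔄) T (fun l => (cnt (fun x => p.rev (List.ofFn x)) l : ℝ)) ≤
      Fintype.card p.Ent * (N1 + 1) / 8)
    (hT : (T : ℝ) ≤ Fintype.card (p.Ent × p.Pw) * (N2 + 1) / 8)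
    (h32 : 32 ≤ Fintype.card (p.Ent × p.Pw))
    {Y : p.Ent × p.Pw → List (Fin p.H → p.O × Fin p.A) → ℝ} (hY0 : ∀ θ l, 0 ≤ Y θ l)
    (hY1 : ∀ θ l, Y θ l ≤ 1) (hYs : ∀ l, ∑ θ, (1 - Y θ l) ≤ 4 / 3) :
    ∃ θ v, 1 / 4 < expect (eplaw (p.mdl hs hb θ v) 𝔄) T (Y θ) := by
  have hK := p.hK
  obtain ⟨θ, v, h⟩ := core (N1 := N1) (N2 := N2) (by omega : 1 ≤ p.K) (eplaw_nonneg (p.mdl0 hs) 𝔄)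
    (eplaw_sum (p.mdl0 hs) 𝔄) hb.1 hε1 hs.1 hs.2 hN1 hN2
    (N := fun θ x => Nf (p.sg1 θ (List.ofFn x))) (F := fun θ x => Ff (p.sg1 θ (List.ofFn x)))
    (X := fun θ v x => p.X s v (p.sg1 θ (List.ofFn x))) (fun θ x => Nf_add_Ff _)
    (fun θ v x => abs_X_le hs v _) (fun θ v x => X_zero s v _)
    (fun θ v l c1 c2 => by
      refine Eq.trans ?_ (E0_one s θ v (𝔄.policyAt l.reverse) c1 c2)
      rw [← mdl0_law hs]
      rfl)
    (fun θ v v' l c1 c2 hpos => by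
      refine Eq.trans ?_ (E0_pair s θ v v' (𝔄.policyAt l.reverse) c1 c2 hpos)
      rw [← mdl0_law hs]
      rfl)
    (rev := fun x => p.rev (List.ofFn x)) (fun w x => sum_Nf_le w _) (fun x => sum_Ff_le _) T hR hT
    h32 hY0 hY1 hYs
  refine ⟨θ, v, ?_⟩
  rwa [expect_congr_q (q := eplaw (p.mdl hs hb θ v) 𝔄) (q' := fun l x => eplaw (p.mdl0 hs) 𝔄 l x *
    (1 + ε * p.X s v (p.sg1 θ (List.ofFn x)))) fun l x => trajProb_ratio hs hb θ v _ x]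

/-- Here `Y θ` indicates that the output policy rarely ends in the lock flagged for `θ`; such a
policy is `ε / 8`-suboptimal in every model with parameter `θ`. -/
lemma pac_fail (hε1 : ε ≤ 0.1) {N1 N2 : ℕ}
    (hN1 : N1 * (ε ^ 2 * s ^ 2) ≤ √p.K / 10)
    (hN2 : N2 * ε ^ 2 ≤ 1 / 50) (𝔄 : Algorithm p.O (Fin p.A) p.H) (T : ℕ)
    (hR : (T : ℝ) ≤ Fintype.card p.Ent * (N1 + 1) / 8)
    (hT : (T : ℝ) ≤ Fintype.card (p.Ent × p.Pw) * (N2 + 1) / 8)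
    (h32 : 32 ≤ Fintype.card (p.Ent × p.Pw)) :
    ∃ θ v, (p.mdl hs hb θ v).pacProb 𝔄 T (ε / 8) < 3 / 4 := by
  classical
  obtain ⟨θ, v, h⟩ := family_core hs hb hε1 hN1 hN2 𝔄 T (by
      refine le_trans ?_ hR
      rw [← expect_length (eplaw_sum (p.mdl0 hs) 𝔄) T]
      refine expect_mono (eplaw_nonneg _ _) T _ _ fun l => ?_
      induction l with
      | nil => simp [cnt]
      | cons x l ih =>
        have : p.rev (List.ofFn x) ≤ 1 := Rf_le _
        simp only [cnt, List.map_cons, List.sum_cons, List.length_cons] at ih ⊢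
        norm_cast at ih ⊢
        omega) hT h32
    (Y := fun θ l => if p.E0 (𝔄.out l.reverse) (fun l => (Ff (p.sg1 θ l) : ℝ)) < 3 / 4 then 1
      else 0)
    (fun θ l => by split_ifs <;> norm_num)
    (fun θ l => by split_ifs <;> norm_num)
    (fun l => by
      have h1 := E0_Ff_sum (𝔄.out l.reverse)
      calc _ ≤ ∑ θ, 4 / 3 * p.E0 (𝔄.out l.reverse) (fun l => (Ff (p.sg1 θ l) : ℝ)) := by
            refine Finset.sum_le_sum fun θ _ => ?_
            have := E0_Ff_nonneg (𝔄.out l.reverse) θ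
            split_ifs with hc <;> linarith
        _ ≤ 4 / 3 := by rw [← Finset.mul_sum]; linarith)
  refine ⟨θ, v, ?_⟩
  rw [pacProb_eq]
  have hmono := expect_mono (eplaw_nonneg (p.mdl hs hb θ v) 𝔄) T
    (fun l => if (p.mdl hs hb θ v).optValue - (p.mdl hs hb θ v).value (𝔄.out l.reverse) < ε / 8
      then 1 else 0)
    (fun l => 1 - if p.E0 (𝔄.out l.reverse) (fun l => (Ff (p.sg1 θ l) : ℝ)) < 3 / 4 then 1 else 0)
    (fun l => by
      have hg := gap hs hb θ v (𝔄.out l.reverse)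
      have hr : 0 ≤ p.E0 (𝔄.out l.reverse) (fun l => (Rf (p.sg1 θ l) : ℝ)) := by
        have := E0_mono (𝔄.out l.reverse) (G := fun _ => 0)
          (G' := fun l => (Rf (p.sg1 θ l) : ℝ)) fun l => by positivity
        rwa [E0_const] at this
      split_ifs with h1 h2 <;> norm_num
      nlinarith)
  rw [expect_sub, expect_const (eplaw_sum _ _)] at hmono
  linarith

lemma regret_mdl0 (𝔄 : Algorithm p.O (Fin p.A) p.H) (T : ℕ) :
    1 / 2 * expect (eplaw (p.mdl0 hs) 𝔄) T
      (fun l => (cnt (fun x => p.rev (List.ofFn x)) l : ℝ)) ≤ (p.mdl0 hs).expRegret 𝔄 T := by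
  rw [expect_cnt (eplaw_sum _ _), expRegret_eq, ← expect_mul]
  refine expect_mono (eplaw_nonneg _ _) T _ _ fun l => ?_
  have := acc_add_smul (1 / 2) 0 (fun l => ∑ x, eplaw (p.mdl0 hs) 𝔄 l x * (p.rev (List.ofFn x) : ℝ))
    (fun _ => 0) l
  simp only [zero_mul, add_zero] at this
  rw [← this]
  refine acc_mono (fun l => ?_) l
  have hg := gap hs (b := 0) ⟨le_rfl, zero_le_one⟩ p.θ0 (fun _ => true) (𝔄.policyAt l.reverse)
  simp only [Rf_sg1] at hg
  rw [← mdl0_law hs] at hg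
  refine le_trans ?_ hg
  simp only [zero_div, zero_mul, add_zero]
  rfl

/-- Here `Y θ` is the average, over the episodes played, of the probability of not ending in the lock
flagged for `θ`. -/
lemma regret_mdl (hε1 : ε ≤ 0.1) {N1 N2 : ℕ} (hN1 : N1 * (ε ^ 2 * s ^ 2) ≤ √p.K / 10)
    (hN2 : N2 * ε ^ 2 ≤ 1 / 50) (𝔄 : Algorithm p.O (Fin p.A) p.H) (T : ℕ)
    (hR : expect (eplaw (p.mdl0 hs) 𝔄) T (fun l => (cnt (fun x => p.rev (List.ofFn x)) l : ℝ)) ≤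
      Fintype.card p.Ent * (N1 + 1) / 8)
    (hT : (T : ℝ) ≤ Fintype.card (p.Ent × p.Pw) * (N2 + 1) / 8)
    (h32 : 32 ≤ Fintype.card (p.Ent × p.Pw)) :
    ∃ θ v, ε * T / 8 ≤ (p.mdl hs hb θ v).expRegret 𝔄 T := by
  set z : p.Ent × p.Pw → List (Fin p.H → p.O × Fin p.A) → ℝ := fun θ l =>
    p.E0 (𝔄.policyAt l.reverse) (fun l => (Ff (p.sg1 θ l) : ℝ)) with hz
  have hz0 : ∀ θ l, 0 ≤ acc (z θ) l := fun θ l => by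
    have h1 := acc_mono (g := fun _ => 0) (g' := z θ) (fun l => E0_Ff_nonneg _ _) l
    have h2 := acc_add_smul (τ := Fin p.H → p.O × Fin p.A) 0 0 (fun _ => 0) (fun _ => 0) l
    simp only [zero_mul, add_zero] at h2
    linarith
  have hzs : ∀ l, ∑ θ, acc (z θ) l ≤ l.length := fun l => by
    rw [← acc_sum, ← acc_one]
    exact acc_mono (fun l => E0_Ff_sum _) l
  have hz1 : ∀ θ l, acc (z θ) l ≤ l.length := fun θ l =>
    (Finset.single_le_sum (f := fun θ => acc (z θ) l) (fun θ _ => hz0 θ l)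
      (Finset.mem_univ θ)).trans (hzs l)
  -- for the empty list the quotient `0 / 0` is `0`, so the test function is `1` there
  obtain ⟨θ, v, h⟩ := family_core hs hb hε1 hN1 hN2 𝔄 T hR hT h32
    (Y := fun θ l => 1 - acc (z θ) l / l.length)
    (fun θ l => by
      have := div_le_one_of_le₀ (hz1 θ l) (by positivity)
      linarith)
    (fun θ l => by
      have := div_nonneg (hz0 θ l) (by positivity : (0 : ℝ) ≤ l.length)
      linarith)
    (fun l => by
      simp only [sub_sub_cancel]
      rw [← Finset.sum_div]
      have := div_le_one_of_le₀ (hzs l) (by positivity)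
      linarith)
  refine ⟨θ, v, ?_⟩
  have h1 : ε / 2 * T * expect (eplaw (p.mdl hs hb θ v) 𝔄) T
      (fun l => 1 - acc (z θ) l / l.length) ≤ (p.mdl hs hb θ v).expRegret 𝔄 T := by
    rw [expRegret_eq, ← expect_mul,
      expect_congr_len (q := eplaw (p.mdl hs hb θ v) 𝔄) T _
        (acc fun l => ε / 2 * 1 + (-(ε / 2)) * z θ l)]
    · refine expect_mono (eplaw_nonneg _ _) T _ _ fun l => acc_mono (fun l => ?_) l
      have hg := gap hs hb θ v (𝔄.policyAt l.reverse)
      have hr : 0 ≤ p.E0 (𝔄.policyAt l.reverse) (fun l => (Rf (p.sg1 θ l) : ℝ)) := by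
        have := E0_mono (𝔄.policyAt l.reverse) (G := fun _ => 0)
          (G' := fun l => (Rf (p.sg1 θ l) : ℝ)) fun l => by positivity
        rwa [E0_const] at this
      simp only [hz]
      linarith
    · intro l hl
      rw [acc_add_smul, acc_one, hl]
      rcases Nat.eq_zero_or_pos T with h0 | h0
      · subst h0
        rw [List.length_eq_zero_iff] at hl
        subst hl
        simp [acc]
      · have : (T : ℝ) ≠ 0 := by positivity
        field_simp
        ring
  refine le_trans ?_ h1
  have : 0 ≤ ε / 2 * T := mul_nonneg (by linarith [hb.1]) (by positivity)
  nlinarith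

end Par
end HardFam

namespace HardFam
namespace Par
variable {p : Par}

/-! ### Size of the parameter set and of the thresholds -/

lemma card_Ent : Fintype.card p.Ent = (p.hmax - p.n + 1) * (2 ^ (p.n - 1) * (p.A - 2)) := by
  simp [Ent]

lemma card_Pw : Fintype.card p.Pw = (p.A - p.r) ^ p.L := by
  simp [Pw]

lemma card_Ent_ge : (2 : ℝ) ^ (p.n - 1) * p.H * p.A / 40 ≤ Fintype.card p.Ent := by
  have hA := p.hA
  have hH := p.hH
  obtain ⟨h1, h2⟩ := hmax_bounds (p := p)
  have e1 : (3 * p.H : ℝ) ≤ 40 * (p.hmax - p.n + 1 : ℕ) := by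
    have : 3 * p.H ≤ 40 * (p.hmax - p.n + 1) := by unfold hmax at *; omega
    exact_mod_cast this
  have e2 : (p.A : ℝ) ≤ 3 * (p.A - 2 : ℕ) := by
    have : p.A ≤ 3 * (p.A - 2) := by omega
    exact_mod_cast this
  rw [card_Ent, Nat.cast_mul, Nat.cast_mul, Nat.cast_pow, Nat.cast_ofNat]
  have h := mul_le_mul e1 e2 (by positivity) (by positivity)
  have h3 : (0 : ℝ) < 2 ^ (p.n - 1) := by positivity
  nlinarith

/-- The password count is large because `A - r ≥ 2A/3 ≥ A^{5/8}` and `L ≥ 4H/5 - 1`. -/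
lemma card_Pw_ge : 3 / 2 * (p.A : ℝ) ^ ((p.H : ℝ) / 2) ≤ p.A * Fintype.card p.Pw := by
  have hA := p.hA
  have hH := p.hH
  have hA' : (3 : ℝ) ≤ p.A := by exact_mod_cast hA
  have hA1 : (1 : ℝ) ≤ p.A := by linarith
  have e1 : 2 / 3 * (p.A : ℝ) ≤ (p.A - p.r : ℕ) := by
    have : 2 * p.A ≤ 3 * (p.A - p.r) := by unfold r; omega
    have : (2 * p.A : ℝ) ≤ 3 * (p.A - p.r : ℕ) := by exact_mod_cast this
    linarith
  have e2 : (p.A : ℝ) ^ 5 ≤ ((p.A - p.r : ℕ) : ℝ) ^ 8 := by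
    refine le_trans ?_ (pow_le_pow_left₀ (by positivity) e1 8)
    have : (3 : ℝ) ^ 3 ≤ p.A ^ 3 := pow_le_pow_left₀ (by norm_num) hA' 3
    have h5 : (0 : ℝ) ≤ p.A ^ 5 := by positivity
    rw [mul_pow, show (p.A : ℝ) ^ 8 = p.A ^ 3 * p.A ^ 5 by ring]
    nlinarith
  rw [card_Pw, ← pow_le_pow_iff_left₀ (by positivity) (by positivity) (by norm_num : 8 ≠ 0),
    mul_pow, mul_pow, Nat.cast_pow, ← pow_mul, mul_comm p.L, pow_mul]
  have e3 : ((p.A : ℝ) ^ ((p.H : ℝ) / 2)) ^ 8 = (p.A : ℝ) ^ (4 * p.H) := by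
    rw [← Real.rpow_natCast, ← Real.rpow_mul (by positivity), ← Real.rpow_natCast]
    congr 1
    push_cast
    ring
  have e4 : (p.A : ℝ) ^ (4 * p.H + 3) ≤ p.A ^ 8 * (p.A ^ 5) ^ p.L := by
    rw [← pow_mul, ← pow_add]
    exact pow_le_pow_right₀ hA1 (by unfold L hmax; omega)
  have e5 : (p.A ^ 5 : ℝ) ^ p.L ≤ (((p.A - p.r : ℕ) : ℝ) ^ 8) ^ p.L :=
    pow_le_pow_left₀ (by positivity) e2 _
  have e6 : (3 : ℝ) ^ 3 ≤ p.A ^ 3 := pow_le_pow_left₀ (by norm_num) hA' 3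
  rw [e3]
  calc (3 / 2 : ℝ) ^ 8 * p.A ^ (4 * p.H) ≤ p.A ^ 3 * p.A ^ (4 * p.H) :=
        mul_le_mul_of_nonneg_right (le_trans (by norm_num) e6) (by positivity)
    _ = p.A ^ (4 * p.H + 3) := by ring
    _ ≤ _ := e4.trans (mul_le_mul_of_nonneg_left e5 (by positivity))

lemma card_ge_32 : 32 ≤ Fintype.card (p.Ent × p.Pw) := by
  have hA := p.hA
  have hH := p.hH
  have hn := p.hn
  rw [Fintype.card_prod, card_Pw]
  have h1 : 1 ≤ Fintype.card p.Ent := by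
    rw [card_Ent]
    exact Nat.mul_pos (by omega) (Nat.mul_pos (by positivity) (by omega))
  have h2 : 2 ^ 7 ≤ (p.A - p.r) ^ p.L :=
    (Nat.pow_le_pow_left (by unfold r; omega) 7).trans
      (Nat.pow_le_pow_right (by unfold r; omega) (by unfold L hmax; omega))
  calc 32 ≤ 1 * 2 ^ 7 := by norm_num
    _ ≤ _ := Nat.mul_le_mul h1 h2

lemma card_family_le : Fintype.card (p.Ent × p.Pw) * 2 ^ p.K + 1 ≤
    2 ^ p.K * p.A ^ p.H * (2 ^ p.n + 4) * p.A * p.H := by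
  have hA := p.hA
  have hH := p.hH
  obtain ⟨h1, h2⟩ := hmax_bounds (p := p)
  rw [Fintype.card_prod, card_Pw, card_Ent]
  have e1 : (p.hmax - p.n + 1) * (2 ^ (p.n - 1) * (p.A - 2)) ≤ p.H * (2 ^ p.n * p.A) :=
    Nat.mul_le_mul (by omega) (Nat.mul_le_mul (Nat.pow_le_pow_right (by norm_num) (by omega))
      (by omega))
  have e2 : (p.A - p.r) ^ p.L ≤ p.A ^ p.H :=
    (Nat.pow_le_pow_left (by omega) _).trans (Nat.pow_le_pow_right (by omega) (by unfold L; omega))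
  have e3 : 1 ≤ 2 ^ p.K * p.A ^ p.H * p.A * p.H :=
    Nat.mul_pos (Nat.mul_pos (Nat.mul_pos (by positivity) (Nat.pow_pos (by omega))) (by omega))
      (by omega)
  calc _ ≤ p.H * (2 ^ p.n * p.A) * p.A ^ p.H * 2 ^ p.K + 2 ^ p.K * p.A ^ p.H * p.A * p.H * 4 :=
        add_le_add (Nat.mul_le_mul_right _ (Nat.mul_le_mul e1 e2)) (by omega)
    _ = _ := by ring

variable {ε σ : ℝ}

/-- Number of revealing probes of one entrance below which the sign pattern is undetectable. -/
def thr1 (p : Par) (ε σ : ℝ) (k : ℕ) : ℕ := ⌊√p.K / (10 * (ε ^ 2 * p.str σ k ^ 2))⌋₊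

/-- Number of final visits for one (entry, password) pair below which the bias `ε` is
undetectable. -/
def thr2 (ε : ℝ) : ℕ := ⌊1 / (50 * ε ^ 2)⌋₊

lemma thr1_le (hε : 0 < ε) (hσ : 0 < σ) (k : ℕ) :
    p.thr1 ε σ k * (ε ^ 2 * p.str σ k ^ 2) ≤ √p.K / 10 := by
  have hs := str_pos (p := p) hσ k
  have h : (p.thr1 ε σ k : ℝ) ≤ _ := Nat.floor_le (by positivity)
  rw [le_div_iff₀ (by positivity)] at h
  linarith

lemma thr2_le (hε : 0 < ε) : thr2 ε * ε ^ 2 ≤ 1 / 50 := by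
  have h : (thr2 ε : ℝ) ≤ _ := Nat.floor_le (by positivity)
  rw [le_div_iff₀ (by positivity)] at h
  linarith

lemma budget1 (hε : 0 < ε) (hσ : 0 < σ) (k : ℕ) :
    1 / 16000 * ((2 : ℝ) ^ (p.n - 1) * √p.K * (p.A : ℝ) ^ (k + 1 + 1) * p.H / (σ ^ 2 * ε ^ 2)) ≤
      Fintype.card p.Ent * (p.thr1 ε σ k + 1) / 8 := by
  have hA := p.hA
  have hs := str_pos (p := p) hσ k
  have h : _ < (p.thr1 ε σ k : ℝ) + 1 := Nat.lt_floor_add_one _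
  have hr : (p.A : ℝ) / 5 ≤ p.r := by
    have : p.A ≤ 5 * p.r := by unfold r; omega
    have : (p.A : ℝ) ≤ 5 * p.r := by exact_mod_cast this
    linarith
  have hA0 : (0 : ℝ) < p.A := by exact_mod_cast (by omega : 0 < p.A)
  have hr0 : (0 : ℝ) < p.r := by linarith
  have hstr : p.str σ k ^ 2 = σ ^ 2 / (p.r * p.A ^ k) := by
    rw [str, div_pow, Real.sq_sqrt (by rw [nrev_eq]; positivity), nrev_eq]
  rw [hstr] at h
  have h2 : √p.K * (p.A / 5 * p.A ^ k) / (10 * (ε ^ 2 * σ ^ 2)) ≤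
      √p.K / (10 * (ε ^ 2 * (σ ^ 2 / (p.r * p.A ^ k)))) := by
    have : √p.K / (10 * (ε ^ 2 * (σ ^ 2 / (p.r * p.A ^ k)))) =
        √p.K * (p.r * p.A ^ k) / (10 * (ε ^ 2 * σ ^ 2)) := by field_simp
    rw [this]
    gcongr
  have h3 := mul_le_mul (card_Ent_ge (p := p)) (h2.trans h.le) (by positivity) (by positivity)
  refine le_trans (le_of_eq ?_) (div_le_div_of_nonneg_right h3 (by norm_num : (0 : ℝ) ≤ 8))
  field_simp
  ring

lemma budget2 (hε : 0 < ε) :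
    3 / 32000 * ((2 : ℝ) ^ (p.n - 1) * (p.A : ℝ) ^ ((p.H : ℝ) / 2) * p.H / ε ^ 2) ≤
      Fintype.card (p.Ent × p.Pw) * (thr2 ε + 1) / 8 := by
  have hA := p.hA
  have hA0 : (0 : ℝ) < p.A := by exact_mod_cast (by omega : 0 < p.A)
  have h : _ < (thr2 ε : ℝ) + 1 := Nat.lt_floor_add_one _
  have h1 := mul_le_mul (card_Ent_ge (p := p)) (card_Pw_ge (p := p)) (by positivity)
    (by positivity)
  have h1' : 3 / 80 * ((2 : ℝ) ^ (p.n - 1) * p.H * (p.A : ℝ) ^ ((p.H : ℝ) / 2)) ≤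
      Fintype.card (p.Ent × p.Pw) := by
    rw [Fintype.card_prod, Nat.cast_mul]
    refine le_of_mul_le_mul_left ?_ hA0
    linarith
  have h3 := mul_le_mul h1' h.le (by positivity) (by positivity)
  refine le_trans (le_of_eq ?_) (div_le_div_of_nonneg_right h3 (by norm_num : (0 : ℝ) ≤ 8))
  field_simp
  ring

end Par
end HardFam

namespace HardFam
namespace Par
variable {p : Par} {ε σ : ℝ}

/-! ### The two lower bounds -/

lemma str_mem (hσ : 0 < σ) (hσ1 : σ ≤ 1) (k : ℕ) : 0 ≤ p.str σ k ∧ p.str σ k ≤ 1 :=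
  ⟨(str_pos hσ k).le, str_le_one hσ1 k⟩

/-- The hard family: the unbiased reference model together with all biased models. -/
def family (p : Par) {s : ℝ} (hs : 0 ≤ s ∧ s ≤ 1) (hb : 0 ≤ ε ∧ ε ≤ 1) :
    Set (POMDP p.S p.O (Fin p.A) p.H) :=
  insert (p.mdl0 hs) (Set.range fun x : (p.Ent × p.Pw) × (Fin p.K → Bool) => p.mdl hs hb x.1 x.2)

lemma family_finite {s : ℝ} (hs : 0 ≤ s ∧ s ≤ 1) (hb : 0 ≤ ε ∧ ε ≤ 1) :
    (p.family hs hb).Finite := (Set.finite_range _).insert _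

lemma family_card {s : ℝ} (hs : 0 ≤ s ∧ s ≤ 1) (hb : 0 ≤ ε ∧ ε ≤ 1) :
    Nat.card (p.family hs hb) ≤ 2 ^ p.K * p.A ^ p.H * (2 ^ p.n + 4) * p.A * p.H := by
  refine le_trans ?_ card_family_le
  rw [Nat.card_coe_set_eq]
  refine (Set.ncard_insert_le _ _).trans (Nat.add_le_add_right ?_ 1)
  rw [← Nat.card_coe_set_eq]
  refine (Finite.card_range_le _).trans (le_of_eq ?_)
  simp [Nat.card_eq_fintype_card]

lemma family_pac (hε : 0 < ε) (hε1 : ε ≤ 0.1) (hb : 0 ≤ ε ∧ ε ≤ 1) (hσ : 0 < σ) (k : ℕ)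
    (hs : 0 ≤ p.str σ k ∧ p.str σ k ≤ 1) (T : ℕ) (𝔄 : Algorithm p.O (Fin p.A) p.H)
    (h : ∀ M ∈ p.family hs hb, (3 : ℝ) / 4 ≤ M.pacProb 𝔄 T (ε / 8)) :
    (1 / 60000 : ℝ) *
      min ((2 : ℝ) ^ (p.n - 1) * √p.K * (p.A : ℝ) ^ (k + 1 + 1) * p.H / (σ ^ 2 * ε ^ 2))
        ((2 : ℝ) ^ (p.n - 1) * (p.A : ℝ) ^ ((p.H : ℝ) / 2) * p.H / ε ^ 2) ≤ (T : ℝ) := by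
  by_contra! hT
  have b1 := budget1 (p := p) hε hσ k
  have b2 := budget2 (p := p) hε
  set X1 := (2 : ℝ) ^ (p.n - 1) * √p.K * (p.A : ℝ) ^ (k + 1 + 1) * p.H / (σ ^ 2 * ε ^ 2)
  set X2 := (2 : ℝ) ^ (p.n - 1) * (p.A : ℝ) ^ ((p.H : ℝ) / 2) * p.H / ε ^ 2
  have p1 : 0 ≤ X1 := by positivity
  have p2 : 0 ≤ X2 := by positivity
  have m1 := min_le_left X1 X2
  have m2 := min_le_right X1 X2
  obtain ⟨θ, v, hlt⟩ := pac_fail hs hb hε1 (thr1_le hε hσ k) (thr2_le hε) 𝔄 T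
    (by linarith) (by linarith) card_ge_32
  exact absurd (h _ (Set.mem_insert_of_mem _ ⟨(θ, v), rfl⟩)) (not_le.mpr hlt)

/-- If the algorithm probes too often its regret on the reference model is large; otherwise the
family is indistinguishable and it pays `ε / 8` per episode. Episodes are truncated at the largest
horizon for which the indistinguishability bound applies. -/
lemma family_regret (hε : 0 < ε) (hε1 : ε ≤ 0.1) (hb : 0 ≤ ε ∧ ε ≤ 1) (hσ : 0 < σ) (k : ℕ)
    (hs : 0 ≤ p.str σ k ∧ p.str σ k ≤ 1) (T : ℕ) (𝔄 : Algorithm p.O (Fin p.A) p.H) :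
    ∃ M ∈ p.family hs hb, (1 / 120000 : ℝ) *
      min ((2 : ℝ) ^ (p.n - 1) * √p.K * (p.A : ℝ) ^ (k + 1 + 1) * p.H /
          ((k + 1 : ℕ) * σ ^ 2 * ε ^ 2))
        (min ((2 : ℝ) ^ (p.n - 1) * (p.A : ℝ) ^ ((p.H : ℝ) / 2) * p.H / ((k + 1 : ℕ) * ε))
          (ε * T)) ≤ M.expRegret 𝔄 T := by
  have b1 := budget1 (p := p) hε hσ k
  have b2 := budget2 (p := p) hε
  have hk : (1 : ℝ) ≤ (k + 1 : ℕ) := by exact_mod_cast Nat.succ_pos k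
  have q1 : (2 : ℝ) ^ (p.n - 1) * √p.K * (p.A : ℝ) ^ (k + 1 + 1) * p.H /
      ((k + 1 : ℕ) * σ ^ 2 * ε ^ 2) ≤
      (2 : ℝ) ^ (p.n - 1) * √p.K * (p.A : ℝ) ^ (k + 1 + 1) * p.H / (σ ^ 2 * ε ^ 2) := by
    refine div_le_div_of_nonneg_left (by positivity) (by positivity) ?_
    rw [mul_assoc]
    exact le_mul_of_one_le_left (by positivity) hk
  have q2 : (2 : ℝ) ^ (p.n - 1) * (p.A : ℝ) ^ ((p.H : ℝ) / 2) * p.H / ((k + 1 : ℕ) * ε) ≤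
      ε * ((2 : ℝ) ^ (p.n - 1) * (p.A : ℝ) ^ ((p.H : ℝ) / 2) * p.H / ε ^ 2) := by
    rw [show ε * ((2 : ℝ) ^ (p.n - 1) * (p.A : ℝ) ^ ((p.H : ℝ) / 2) * p.H / ε ^ 2) =
      (2 : ℝ) ^ (p.n - 1) * (p.A : ℝ) ^ ((p.H : ℝ) / 2) * p.H / ε by field_simp]
    exact div_le_div_of_nonneg_left (by positivity) hε (le_mul_of_one_le_left hε.le hk)
  set X1 := (2 : ℝ) ^ (p.n - 1) * √p.K * (p.A : ℝ) ^ (k + 1 + 1) * p.H / (σ ^ 2 * ε ^ 2)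
  set X2 := (2 : ℝ) ^ (p.n - 1) * (p.A : ℝ) ^ ((p.H : ℝ) / 2) * p.H / ε ^ 2
  set Y1 := (2 : ℝ) ^ (p.n - 1) * √p.K * (p.A : ℝ) ^ (k + 1 + 1) * p.H /
    ((k + 1 : ℕ) * σ ^ 2 * ε ^ 2)
  set Y2 := (2 : ℝ) ^ (p.n - 1) * (p.A : ℝ) ^ ((p.H : ℝ) / 2) * p.H / ((k + 1 : ℕ) * ε)
  have p1 : 0 ≤ X1 := by positivity
  have p2 : 0 ≤ X2 := by positivity
  have m1 : min Y1 (min Y2 (ε * T)) ≤ Y1 := min_le_left _ _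
  have m2 : min Y1 (min Y2 (ε * T)) ≤ Y2 := (min_le_right _ _).trans (min_le_left _ _)
  have m3 : min Y1 (min Y2 (ε * T)) ≤ ε * T := (min_le_right _ _).trans (min_le_right _ _)
  set T1 : ℝ := Fintype.card (p.Ent × p.Pw) * (thr2 ε + 1) / 8 with hT1
  -- `T1 ≥ 12`, so that taking the integer part loses at most a factor `11 / 12`
  have hT1' : 12 ≤ T1 := by
    have c : (32 : ℝ) ≤ Fintype.card (p.Ent × p.Pw) := by exact_mod_cast card_ge_32 (p := p)
    have d : (2 : ℕ) ≤ thr2 ε := by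
      refine Nat.le_floor ?_
      rw [le_div_iff₀ (by positivity)]
      norm_num at hε1 ⊢
      nlinarith
    have d' : (2 : ℝ) ≤ thr2 ε := by exact_mod_cast d
    rw [hT1]
    nlinarith
  set T' := min T ⌊T1⌋₊ with hT'
  have hle : (T' : ℝ) ≤ T1 :=
    le_trans (by exact_mod_cast min_le_right _ _) (Nat.floor_le (by linarith))
  by_cases hR : expect (eplaw (p.mdl0 hs) 𝔄) T'
      (fun l => (cnt (fun x => p.rev (List.ofFn x)) l : ℝ)) ≤
      Fintype.card p.Ent * (p.thr1 ε σ k + 1) / 8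
  · obtain ⟨θ, v, h⟩ := regret_mdl hs hb hε1 (thr1_le hε hσ k) (thr2_le hε) 𝔄 T' hR hle card_ge_32
    refine ⟨_, Set.mem_insert_of_mem _ ⟨(θ, v), rfl⟩, ?_⟩
    refine le_trans ?_ (h.trans (expRegret_mono _ 𝔄 (min_le_left _ _)))
    rcases le_total T ⌊T1⌋₊ with hc | hc
    · have e : T' = T := min_eq_left hc
      rw [e]
      have : 0 ≤ ε * T := by positivity
      linarith
    · have e : T' = ⌊T1⌋₊ := min_eq_right hc
      have f : T1 < (⌊T1⌋₊ : ℝ) + 1 := Nat.lt_floor_add_one _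
      rw [e]
      have g : 11 / 12 * (3 / 32000 * X2) ≤ (⌊T1⌋₊ : ℝ) := by linarith
      have g2 := mul_le_mul_of_nonneg_left g hε.le
      have : 0 ≤ ε * X2 := by positivity
      linarith
  · push Not at hR
    refine ⟨_, Set.mem_insert _ _, le_trans ?_ ((regret_mdl0 hs 𝔄 T').trans
      (expRegret_mono _ 𝔄 (min_le_left _ _)))⟩
    linarith

end Par
end HardFam

/-- **Proposition E.1 (hard instance family for multi-step revealing POMDPs: regret and
PAC).**  For every `ε ∈ (0,0.1]`, `σ ∈ (0,1]`, `m, n ≥ 1`, `K ≥ 2`, `A ≥ 3`,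
`H ≥ 8n+m+1`, there is a finite family `ℳ` of POMDPs with `|𝒮| = 2ⁿ+4`,
`|𝒪| = 2ⁿ+2K+3`, `|𝒜| = A`, each `(m+1)`-step `α`-revealing with `α = σ/(σ+2)`, with
`|ℳ| ≤ 2^K·A^H·(2ⁿ+4)·A·H`, such that (4) every `T`-episode algorithm suffers expected
regret at least
`(1/120000)·min{ 2^{n−1}·√K·A^{m+1}·H/(m σ²ε²), 2^{n−1}·A^{H/2}·H/(m ε), εT }` on some
member of `ℳ`, and (5) any `T`-episode algorithm that is `(ε/8)`-accurate with probability
`≥ 3/4` on all of `ℳ` must satisfy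
`T ≥ (1/60000)·min{ 2^{n−1}·√K·A^{m+1}·H/(σ²ε²), 2^{n−1}·A^{H/2}·H/ε² }`. -/
theorem multi_step_hard_family_regret_pac (ε σ : ℝ) (m n K A H : ℕ)
    (hε : 0 < ε) (hε' : ε ≤ 0.1) (hσ : 0 < σ) (hσ' : σ ≤ 1)
    (hm : 1 ≤ m) (hn : 1 ≤ n) (hK : 2 ≤ K) (hA : 3 ≤ A) (hH : 8 * n + m + 1 ≤ H) :
    ∃ ℳ : Set (POMDP (Fin (2 ^ n + 4)) (Fin (2 ^ n + 2 * K + 3)) (Fin A) H),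
      ℳ.Finite ∧
      (∀ M ∈ ℳ, M.IsRevealing (m + 1) (σ / (σ + 2))) ∧
      Nat.card ℳ ≤ 2 ^ K * A ^ H * (2 ^ n + 4) * A * H ∧
      (∀ (T : ℕ) (𝔄 : Algorithm (Fin (2 ^ n + 2 * K + 3)) (Fin A) H),
        ∃ M ∈ ℳ,
          (1 / 120000 : ℝ) *
              min ((2 : ℝ) ^ (n - 1) * Real.sqrt K * (A : ℝ) ^ (m + 1) * H /
                    (m * σ ^ 2 * ε ^ 2))
                (min ((2 : ℝ) ^ (n - 1) * (A : ℝ) ^ ((H : ℝ) / 2) * H / (m * ε))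
                  (ε * T)) ≤
            M.expRegret 𝔄 T) ∧
      ∀ (T : ℕ) (𝔄 : Algorithm (Fin (2 ^ n + 2 * K + 3)) (Fin A) H),
        (∀ M ∈ ℳ, (3 : ℝ) / 4 ≤ M.pacProb 𝔄 T (ε / 8)) →
        (1 / 60000 : ℝ) *
            min ((2 : ℝ) ^ (n - 1) * Real.sqrt K * (A : ℝ) ^ (m + 1) * H / (σ ^ 2 * ε ^ 2))
              ((2 : ℝ) ^ (n - 1) * (A : ℝ) ^ ((H : ℝ) / 2) * H / ε ^ 2) ≤ (T : ℝ) := by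
  obtain ⟨k, rfl⟩ : ∃ k, m = k + 1 := ⟨m - 1, by omega⟩
  let p : HardFam.Par := ⟨n, K, A, H, hn, hK, hA, by omega⟩
  have hs := HardFam.Par.str_mem (p := p) hσ hσ' k
  have hb : 0 ≤ ε ∧ ε ≤ 1 := ⟨hε.le, hε'.trans (by norm_num)⟩
  have hk : k + 2 ≤ p.H := by change k + 2 ≤ H; omega
  refine ⟨p.family hs hb, HardFam.Par.family_finite hs hb, ?_, HardFam.Par.family_card hs hb,
    HardFam.Par.family_regret hε hε' hb hσ k hs, HardFam.Par.family_pac hε hε' hb hσ k hs⟩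
  rintro M (rfl | ⟨⟨θ, v⟩, rfl⟩)
  · exact HardFam.Par.mdl_revealing _ hσ k hk hs _ _
  · exact HardFam.Par.mdl_revealing _ hσ k hk hs _ _
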